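/- arXiv:2309.13576 — 4 statements merged into one kernel-verified Lean document; each statement's English description precedes it below -/
import Mathlib

section
/- Let X be a compact metric space and f : X → X a continuous map whose topological entropy is zero. Then for every continuous function φ : X → ℂ and every point x ∈ X, the averages (1/p) ∑_{0 ≤ n < p} (n/p) φ(fⁿ(x)) converge to 0 as p tends to infinity over the odd primes, where (n/p) denotes the Legendre symbol of n modulo p. -/
open Filter MeasureTheory

open Classical in
/-- The Legendre symbol `(n/p)`: `0` if `p ∣ n`, `1` if `n` is a nonzero quadratic residue
mod `p`, and `-1` otherwise. -/
noncomputable def legendre (p n : ℕ) : ℤ :=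
  if (n : ZMod p) = 0 then 0 else if IsSquare ((n : ZMod p)) then 1 else -1

/-! By Stepanov's method, complete sums of `((f n)/p)` are `o(p)` for every fixed degree of `f`,
unless `f` is a constant times a square: an auxiliary polynomial of low degree vanishes to high
order wherever the symbol has a prescribed value. Applied to `f = ∏ (X + i)`, this shows that the
correlations of the Legendre symbols along distinct shifts tend to zero.

Hence, on a block of fixed length `L`, the symbols have the exponential moments of independent
signs, up to a factor `2`, and by Chernoff's bound they correlate with a fixed bounded pattern
only on an exponentially small proportion of the blocks. An orbit of zero entropy shows only
`exp (o(L))` patterns of length `L`, and a union bound over the patterns concludes. -/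

section TwistedDerivative

open Polynomial

variable {R : Type*} [CommRing R]

/-- The first-order differential operator `w ↦ f w' + c f' w`; for `c = n + 1` it satisfies
`(fⁿ⁺¹ w)' = fⁿ · twistedDerivative f (n + 1) w`. -/
noncomputable def twistedDerivative (f : R[X]) (c : R) : R[X] →ₗ[R] R[X] :=
  LinearMap.mulLeft R f ∘ₗ derivative + c • LinearMap.mulLeft R (derivative f)

/-- The operator which `k` differentiations of `fᶜ w` leave in front of `fᶜ⁻ᵏ`: the composite of
the `twistedDerivative f (c - i)` for `i < k`, with `i = 0` applied first. -/
noncomputable def iterTwistedDerivative (f : R[X]) (c : R) : ℕ → (R[X] →ₗ[R] R[X])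
  | 0 => LinearMap.id
  | k + 1 => twistedDerivative f (c - k) ∘ₗ iterTwistedDerivative f c k

theorem twistedDerivative_apply (f : R[X]) (c : R) (w : R[X]) :
    twistedDerivative f c w = f * derivative w + c • (derivative f * w) := rfl

theorem iterTwistedDerivative_succ_apply (f : R[X]) (c : R) (k : ℕ) (w : R[X]) :
    iterTwistedDerivative f c (k + 1) w =
      twistedDerivative f (c - k) (iterTwistedDerivative f c k w) := rfl

theorem natDegree_twistedDerivative_le (f : R[X]) (c : R) (w : R[X]) :
    (twistedDerivative f c w).natDegree ≤ w.natDegree + f.natDegree := by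
  rw [twistedDerivative_apply]
  refine natDegree_add_le_of_degree_le ?_ ?_
  · have := natDegree_derivative_le w
    exact natDegree_mul_le.trans (by omega)
  · have := natDegree_derivative_le f
    exact (natDegree_smul_le _ _).trans (natDegree_mul_le.trans (by omega))

theorem natDegree_iterTwistedDerivative_le (f : R[X]) (c : R) (k : ℕ) (w : R[X]) :
    (iterTwistedDerivative f c k w).natDegree ≤ w.natDegree + k * f.natDegree := by
  induction k with
  | zero => simp [iterTwistedDerivative]
  | succ k ih =>
    rw [iterTwistedDerivative_succ_apply, add_one_mul, ← add_assoc]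
    exact (natDegree_twistedDerivative_le _ _ _).trans (by gcongr)

theorem derivative_pow_succ_mul (f : R[X]) (n : ℕ) (w : R[X]) :
    derivative (f ^ (n + 1) * w) = f ^ n * twistedDerivative f (n + 1) w := by
  rw [twistedDerivative_apply, derivative_mul, derivative_pow_succ, smul_eq_C_mul]
  simp only [C_add, C_1, map_natCast]
  ring

theorem iterate_derivative_pow_add_mul (f : R[X]) (n k : ℕ) (w : R[X]) :
    derivative^[k] (f ^ (n + k) * w) = f ^ n * iterTwistedDerivative f ↑(n + k) k w := by
  induction k generalizing n with
  | zero => simp [iterTwistedDerivative]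
  | succ k ih =>
    rw [Function.iterate_succ_apply', ← add_assoc, add_right_comm, ih, derivative_pow_succ_mul,
      iterTwistedDerivative_succ_apply]
    congr 3
    push_cast
    ring

theorem iterate_derivative_mul_of_derivative_eq_zero {y : R[X]} (hy : derivative y = 0)
    (w : R[X]) (k : ℕ) : derivative^[k] (w * y) = derivative^[k] w * y := by
  induction k with
  | zero => rfl
  | succ k ih =>
    rw [Function.iterate_succ_apply', ih, derivative_mul, hy, mul_zero, add_zero,
      Function.iterate_succ_apply']

end TwistedDerivative

section Polynomials

open Polynomial

theorem card_mul_le_natDegree_of_le_rootMultiplicity {R : Type*} [CommRing R] [IsDomain R]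
    {P : R[X]} {S : Finset R} {k : ℕ} (hS : ∀ x ∈ S, k ≤ P.rootMultiplicity x) :
    S.card * k ≤ P.natDegree := by
  classical
  calc S.card * k = ∑ _x ∈ S, k := by rw [Finset.sum_const, smul_eq_mul]
    _ ≤ ∑ x ∈ S, P.roots.count x := Finset.sum_le_sum fun x hx => by
        rw [count_roots]
        exact hS x hx
    _ ≤ ∑ x ∈ S ∪ P.roots.toFinset, P.roots.count x :=
        Finset.sum_le_sum_of_subset Finset.subset_union_left
    _ = Multiset.card P.roots := Multiset.sum_count_eq_card fun x hx =>
        Finset.mem_union_right _ (Multiset.mem_toFinset.2 hx)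
    _ ≤ P.natDegree := card_roots' P

theorem le_rootMultiplicity_of_forall_isRoot_iterate_derivative {R : Type*} [CommRing R]
    [IsDomain R] {P : R[X]} (hP : P ≠ 0) {x : R} {K : ℕ} (hK : K ≤ ringChar R)
    (h : ∀ k < K, (derivative^[k] P).IsRoot x) : K ≤ P.rootMultiplicity x := by
  obtain _ | K := K
  · exact Nat.zero_le _
  refine lt_rootMultiplicity_of_isRoot_iterate_derivative_of_mem_nonZeroDivisors' hP
    (fun k hk => h k (Nat.lt_succ_of_le hk)) fun k hk hk0 => mem_nonZeroDivisors_of_ne_zero ?_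
  rw [Ne, ringChar.spec]
  exact fun hd => absurd (Nat.le_of_dvd (Nat.pos_of_ne_zero hk0) hd) (by omega)

theorem forall_eq_zero_of_sum_mul_X_pow_eq_zero {R : Type*} [CommRing R] {q J : ℕ}
    {g : Fin J → R[X]} (hg : ∀ j, X ^ q ∣ g j → g j = 0)
    (h : ∑ j, g j * X ^ (q * j : ℕ) = 0) (j : Fin J) : g j = 0 := by
  induction j using WellFoundedLT.induction with
  | ind j ih =>
    have hdvd : X ^ (q * (j + 1 : ℕ)) ∣ g j * X ^ (q * j : ℕ) := by
      rw [← Finset.add_sum_erase _ _ (Finset.mem_univ j)] at h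
      rw [eq_neg_of_add_eq_zero_left h, dvd_neg]
      refine Finset.dvd_sum fun i hi => ?_
      rcases lt_or_gt_of_ne (Finset.ne_of_mem_erase hi) with hij | hij
      · simp only [ih i hij, zero_mul, dvd_zero]
      · exact Dvd.dvd.mul_left (pow_dvd_pow _ (Nat.mul_le_mul_left _ hij)) _
    obtain ⟨c, hc⟩ := hdvd
    refine hg j ⟨c, (isRegular_X_pow (q * j)).right ?_⟩
    simp only [hc]
    ring

theorem exists_ne_zero_forall_apply_eq_zero {F V W ι : Type*} [Field F] [AddCommGroup V]
    [Module F V] [FiniteDimensional F V] [AddCommGroup W] [Module F W] [Fintype ι]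
    {Φ : ι → V →ₗ[F] W} {W₀ : Submodule F W} [FiniteDimensional F W₀] (hΦ : ∀ i v, Φ i v ∈ W₀)
    (hdim : Fintype.card ι * Module.finrank F W₀ < Module.finrank F V) :
    ∃ v ≠ 0, ∀ i, Φ i v = 0 := by
  have hker : (LinearMap.pi fun i => (Φ i).codRestrict W₀ (hΦ i)).ker ≠ ⊥ := by
    apply LinearMap.ker_ne_bot_of_finrank_lt
    rwa [Module.finrank_pi_fintype, Finset.sum_const, Finset.card_univ, smul_eq_mul]
  obtain ⟨v, hv, hv0⟩ := Submodule.exists_mem_ne_zero_of_ne_bot hker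
  exact ⟨v, hv0, fun i => congrArg Subtype.val (congrFun hv i)⟩

theorem mem_degreeLT_succ_iff_natDegree_le {R : Type*} [Semiring R] {n : ℕ} {g : R[X]} :
    g ∈ degreeLT R (n + 1) ↔ g.natDegree ≤ n := by
  rw [degreeLT_succ_eq_degreeLE, mem_degreeLE, natDegree_le_iff_degree_le]

theorem eq_zero_of_mul_sq_eq_C_mul_sq {F : Type*} [Field F] {f r s : F[X]} {a : F}
    (ha : a ≠ 0) (hf : ∀ c g, f ≠ C c * g ^ 2) (h : f * r ^ 2 = C a * s ^ 2) :
    r = 0 ∧ s = 0 := by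
  have hr : r = 0 := by
    by_contra hr
    have hrs : r ^ 2 ∣ s ^ 2 := by
      refine ⟨C a⁻¹ * f, ?_⟩
      rw [mul_left_comm, mul_comm _ f, h, ← mul_assoc, ← C_mul, inv_mul_cancel₀ ha, C_1, one_mul]
    obtain ⟨g, rfl⟩ := (UniqueFactorizationMonoid.pow_dvd_pow_iff_dvd two_ne_zero).1 hrs
    exact hf a g (mul_right_cancel₀ (pow_ne_zero 2 hr) (h.trans (by ring)))
  refine ⟨hr, ?_⟩
  rw [hr, zero_pow two_ne_zero, mul_zero, eq_comm, mul_eq_zero, C_eq_zero] at h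
  exact pow_eq_zero_iff two_ne_zero |>.1 (h.resolve_left ha)

theorem ne_C_mul_sq_of_squarefree {F : Type*} [Field F] {f : F[X]} (hf : Squarefree f)
    (hdeg : f.natDegree ≠ 0) (c : F) (g : F[X]) : f ≠ C c * g ^ 2 := by
  rintro rfl
  have hg : IsUnit g := hf g (by rw [← sq]; exact dvd_mul_left _ _)
  refine hdeg (Nat.le_zero.1 ((natDegree_C_mul_le c _).trans (natDegree_pow_le.trans ?_)))
  rw [natDegree_eq_zero_of_isUnit hg, mul_zero]

end Polynomials

section Stepanov

open Polynomial

variable {F : Type*} [Field F] [Fintype F]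

theorem X_pow_card_dvd_pow_card_sub_C (f : F[X]) :
    X ^ Fintype.card F ∣ f ^ Fintype.card F - C (f.eval 0) := by
  have h : (X : F[X]) ∣ f - C (f.eval 0) := by simp [X_dvd_iff, coeff_zero_eq_eval_zero]
  simpa only [map_sub, expand_X, expand_C, FiniteField.expand_card]
    using map_dvd (expand F (Fintype.card F)) h

theorem eq_zero_of_X_pow_card_dvd_add_mul_pow (hF : ringChar F ≠ 2) {f r s : F[X]}
    (hf0 : f.eval 0 ≠ 0) (hf : ∀ c g, f ≠ C c * g ^ 2) {A : ℕ}
    (hA : 2 * A + f.natDegree < Fintype.card F) (hr : r.natDegree ≤ A) (hs : s.natDegree ≤ A)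
    (h : X ^ Fintype.card F ∣ r + s * f ^ (Fintype.card F / 2)) : r = 0 ∧ s = 0 := by
  have hodd : Fintype.card F / 2 * 2 + 1 = Fintype.card F := by
    have := FiniteField.odd_card_of_char_ne_two hF
    omega
  have hpow : f ^ Fintype.card F = (f ^ (Fintype.card F / 2)) ^ 2 * f := by
    rw [← pow_mul, ← pow_succ, hodd]
  -- Modulo `X ^ q` the hypothesis squares to `f * r ^ 2 ≡ f 0 * s ^ 2`, and both sides have degree
  -- less than `q`, so that they are equal.
  have hdvd : X ^ Fintype.card F ∣ f * r ^ 2 - C (f.eval 0) * s ^ 2 := by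
    have key : f * r ^ 2 - C (f.eval 0) * s ^ 2 =
        (r + s * f ^ (Fintype.card F / 2)) * (f * (r - s * f ^ (Fintype.card F / 2))) +
          (f ^ Fintype.card F - C (f.eval 0)) * s ^ 2 := by
      rw [hpow]
      ring
    rw [key]
    exact dvd_add (h.mul_right _) ((X_pow_card_dvd_pow_card_sub_C f).mul_right _)
  have hdeg : (f * r ^ 2 - C (f.eval 0) * s ^ 2).natDegree ≤ 2 * A + f.natDegree := by
    refine (natDegree_sub_le _ _).trans (max_le ?_ ?_)
    · rw [add_comm (2 * A)]
      exact natDegree_mul_le_of_le le_rfl (natDegree_pow_le_of_le 2 hr)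
    · exact (natDegree_C_mul_le _ _).trans ((natDegree_pow_le_of_le 2 hs).trans le_self_add)
  refine eq_zero_of_mul_sq_eq_C_mul_sq hf0 hf (sub_eq_zero.1 ?_)
  refine eq_zero_of_dvd_of_natDegree_lt hdvd ?_
  rw [natDegree_X_pow]
  exact hdeg.trans_lt hA

/-- The polynomial `∑ⱼ (uⱼ₀ + uⱼ₁ f ^ ((q - 1) / 2)) X ^ (q j)`, with `q` odd the cardinality of the
field, from which Stepanov's method builds a polynomial with many high-order zeros. -/
noncomputable def stepanovPoly (f : F[X]) {J : ℕ} (u : Fin J × Fin 2 → F[X]) : F[X] :=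
  ∑ i, f ^ (i.2 * (Fintype.card F / 2) : ℕ) * u i * X ^ (Fintype.card F * i.1 : ℕ)

/-- Up to a power of `f`, the `k`-th derivative of `f ^ M * stepanovPoly f u`, reduced by means of
`x ^ q = x` and `f x ^ ((q - 1) / 2) = a`. -/
noncomputable def reducedDerivative (f : F[X]) (M k : ℕ) (a : F) (J : ℕ) :
    (Fin J × Fin 2 → F[X]) →ₗ[F] F[X] :=
  ∑ i : Fin J × Fin 2, a ^ (i.2 : ℕ) • LinearMap.mulRight F (X ^ (i.1 : ℕ)) ∘ₗ
    iterTwistedDerivative f ↑(M + i.2 * (Fintype.card F / 2)) k ∘ₗ LinearMap.proj i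

theorem reducedDerivative_apply (f : F[X]) (M k : ℕ) (a : F) {J : ℕ} (u : Fin J × Fin 2 → F[X]) :
    reducedDerivative f M k a J u = ∑ i, a ^ (i.2 : ℕ) •
      (iterTwistedDerivative f ↑(M + i.2 * (Fintype.card F / 2)) k (u i) * X ^ (i.1 : ℕ)) := by
  simp [reducedDerivative]

theorem eval_iterate_derivative_pow_mul_stepanovPoly (f : F[X]) {M k : ℕ} (hk : k ≤ M) {a x : F}
    (hx : f.eval x ^ (Fintype.card F / 2) = a) {J : ℕ} (u : Fin J × Fin 2 → F[X]) :
    (derivative^[k] (f ^ M * stepanovPoly f u)).eval x =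
      f.eval x ^ (M - k) * (reducedDerivative f M k a J u).eval x := by
  rw [stepanovPoly, Finset.mul_sum, iterate_derivative_sum, reducedDerivative_apply,
    eval_finsetSum, eval_finsetSum, Finset.mul_sum]
  refine Finset.sum_congr rfl fun i _ => ?_
  set e := (i.2 : ℕ) * (Fintype.card F / 2)
  have hX : derivative (X ^ (Fintype.card F * i.1) : F[X]) = 0 := by
    rw [derivative_X_pow, Nat.cast_mul, Nat.cast_card_eq_zero, zero_mul, C_0, zero_mul]
  have hM : f ^ M * (f ^ e * u i * X ^ (Fintype.card F * i.1)) =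
      f ^ (M - k + e + k) * u i * X ^ (Fintype.card F * i.1) := by
    rw [show M - k + e + k = M + e by omega, pow_add]
    ring
  rw [hM, iterate_derivative_mul_of_derivative_eq_zero hX, iterate_derivative_pow_add_mul,
    show M - k + e + k = M + e by omega, ← hx]
  simp only [eval_mul, eval_pow, eval_X, eval_smul, smul_eq_mul, pow_add, pow_mul,
    FiniteField.pow_card, e, ← mul_comm (Fintype.card F / 2)]
  ring

theorem natDegree_reducedDerivative_le (f : F[X]) (M k : ℕ) (a : F) {J A : ℕ}
    {u : Fin (J + 1) × Fin 2 → F[X]} (hu : ∀ i, (u i).natDegree ≤ A) :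
    (reducedDerivative f M k a (J + 1) u).natDegree ≤ A + k * f.natDegree + J := by
  rw [reducedDerivative_apply]
  refine natDegree_sum_le_of_forall_le _ _ fun i _ => (natDegree_smul_le _ _).trans ?_
  refine natDegree_mul_le_of_le ?_ ((natDegree_X_pow_le _).trans i.1.is_le)
  exact (natDegree_iterTwistedDerivative_le _ _ _ _).trans (by gcongr; exact hu i)

theorem natDegree_stepanovPoly_le (f : F[X]) {J A : ℕ} (hA : A ≤ Fintype.card F)
    {u : Fin (J + 1) × Fin 2 → F[X]} (hu : ∀ i, (u i).natDegree ≤ A) :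
    (stepanovPoly f u).natDegree ≤ (f.natDegree + 1 + J) * Fintype.card F := by
  refine natDegree_sum_le_of_forall_le _ _ fun i _ => ?_
  have hi : (i.2 : ℕ) * (Fintype.card F / 2) ≤ Fintype.card F := by
    have := i.2.is_le
    nlinarith [Nat.div_le_self (Fintype.card F) 2]
  calc _ ≤ (i.2 * (Fintype.card F / 2)) * f.natDegree + (u i).natDegree + Fintype.card F * i.1 :=
        natDegree_mul_le_of_le (natDegree_mul_le_of_le natDegree_pow_le le_rfl)
          (natDegree_X_pow_le _)
    _ ≤ Fintype.card F * f.natDegree + Fintype.card F + Fintype.card F * J := by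
        gcongr
        · exact (hu i).trans hA
        · exact i.1.is_le
    _ = _ := by ring

theorem stepanovPoly_ne_zero (hF : ringChar F ≠ 2) {f : F[X]} (hf0 : f.eval 0 ≠ 0)
    (hf : ∀ c g, f ≠ C c * g ^ 2) {J A : ℕ} (hA : 2 * A + f.natDegree < Fintype.card F)
    {u : Fin J × Fin 2 → F[X]} (hu : ∀ i, (u i).natDegree ≤ A) (hu0 : u ≠ 0) :
    stepanovPoly f u ≠ 0 := by
  intro h
  have hsum : ∑ j, (u (j, 0) + u (j, 1) * f ^ (Fintype.card F / 2)) *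
      X ^ (Fintype.card F * j : ℕ) = 0 := by
    rw [← h, stepanovPoly, Fintype.sum_prod_type]
    refine Finset.sum_congr rfl fun j _ => ?_
    simp only [Fin.sum_univ_two, Fin.val_zero, Fin.val_one, zero_mul, pow_zero, one_mul]
    ring
  have hstep (j : Fin J) (hj : X ^ Fintype.card F ∣
      u (j, 0) + u (j, 1) * f ^ (Fintype.card F / 2)) : u (j, 0) = 0 ∧ u (j, 1) = 0 :=
    eq_zero_of_X_pow_card_dvd_add_mul_pow hF hf0 hf hA (hu _) (hu _) hj
  have hzero := forall_eq_zero_of_sum_mul_X_pow_eq_zero (fun j hj => by simp [hstep j hj]) hsum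
  refine hu0 (funext fun ⟨j, e⟩ => ?_)
  have hj := hstep j ((hzero j).symm ▸ dvd_zero _)
  fin_cases e
  exacts [hj.1, hj.2]

theorem exists_reducedDerivative_eq_zero (f : F[X]) (M : ℕ) (a : F) {A J K : ℕ}
    (h : K * (A + K * f.natDegree + J + 1) < 2 * (J + 1) * (A + 1)) :
    ∃ u : Fin (J + 1) × Fin 2 → F[X], u ≠ 0 ∧ (∀ i, (u i).natDegree ≤ A) ∧
      ∀ k < K, reducedDerivative f M k a (J + 1) u = 0 := by
  have hfin (n : ℕ) : FiniteDimensional F (degreeLT F n) :=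
    (degreeLTEquiv F n).symm.finiteDimensional
  have hfinrank (n : ℕ) : Module.finrank F (degreeLT F n) = n := by
    rw [(degreeLTEquiv F n).finrank_eq, Module.finrank_fin_fun]
  have hdeg (u : Fin (J + 1) × Fin 2 → degreeLT F (A + 1)) (i) : (u i : F[X]).natDegree ≤ A :=
    mem_degreeLT_succ_iff_natDegree_le.1 (u i).2
  obtain ⟨u, hu0, hu⟩ := exists_ne_zero_forall_apply_eq_zero
    (Φ := fun k : Fin K =>
      reducedDerivative f M k a (J + 1) ∘ₗ (degreeLT F (A + 1)).subtype.compLeft _)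
    (W₀ := degreeLT F (A + K * f.natDegree + J + 1))
    (fun k u => mem_degreeLT_succ_iff_natDegree_le.2 <|
      (natDegree_reducedDerivative_le f M k a (hdeg u)).trans (by gcongr; exact k.2.le))
    (by
      rw [hfinrank, Module.finrank_pi_fintype]
      simp only [hfinrank, Finset.sum_const, Finset.card_univ, Fintype.card_prod, Fintype.card_fin,
        smul_eq_mul]
      linarith)
  refine ⟨fun i => u i, fun h0 => hu0 ?_, hdeg u, fun k hk => hu ⟨k, hk⟩⟩
  exact funext fun i => Subtype.ext (congrFun h0 i)

theorem card_mul_le_of_eval_pow_eq (hF : ringChar F ≠ 2) {f : F[X]} (hf0 : f.eval 0 ≠ 0)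
    (hf : ∀ c g, f ≠ C c * g ^ 2) {t : ℕ} (ht : 2 * t ≤ ringChar F)
    (hq : 2 * (t * (2 * t * f.natDegree + t + 1)) + f.natDegree < Fintype.card F) {a : F}
    {S : Finset F} (hS : ∀ x ∈ S, f.eval x ^ (Fintype.card F / 2) = a) :
    S.card * (2 * t) ≤ 2 * t * f.natDegree + (f.natDegree + 1 + t) * Fintype.card F := by
  -- With this `A` the `2 * (t + 1) * (A + 1)` coefficients of `u` outnumber the linear conditions.
  set A := t * (2 * t * f.natDegree + t + 1)
  obtain ⟨u, hu0, hudeg, hu⟩ := exists_reducedDerivative_eq_zero f (2 * t) a (A := A) (J := t)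
    (K := 2 * t) (by simp only [A]; nlinarith)
  have hP : f ^ (2 * t) * stepanovPoly f u ≠ 0 :=
    mul_ne_zero (pow_ne_zero _ fun h => hf 0 0 (by simp [h]))
      (stepanovPoly_ne_zero hF hf0 hf hq hudeg hu0)
  have hroot (x : F) (hx : x ∈ S) :
      2 * t ≤ (f ^ (2 * t) * stepanovPoly f u).rootMultiplicity x := by
    refine le_rootMultiplicity_of_forall_isRoot_iterate_derivative hP ht fun k hk => ?_
    rw [IsRoot.def, eval_iterate_derivative_pow_mul_stepanovPoly f hk.le (hS x hx), hu k hk,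
      eval_zero, mul_zero]
  exact (card_mul_le_natDegree_of_le_rootMultiplicity hroot).trans
    (natDegree_mul_le_of_le natDegree_pow_le (natDegree_stepanovPoly_le f (by omega) hudeg))

theorem mul_abs_sum_quadraticChar_eval_le_of_eval_zero_ne_zero [DecidableEq F]
    (hF : ringChar F ≠ 2) {f : F[X]} (hf0 : f.eval 0 ≠ 0) (hf : ∀ c g, f ≠ C c * g ^ 2) {t : ℕ}
    (ht : 2 * t ≤ ringChar F)
    (hq : 2 * (t * (2 * t * f.natDegree + t + 1)) + f.natDegree < Fintype.card F) :
    t * |∑ x, quadraticChar F (f.eval x)| ≤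
      3 * f.natDegree * t + (f.natDegree + 1) * Fintype.card F := by
  have hzero : ({x | f.eval x = 0} : Finset F).card ≤ f.natDegree := by
    have hfne : f ≠ 0 := fun h => hf0 (by rw [h, eval_zero])
    exact card_le_degree_of_subset_roots fun x hx => by simpa [hfne] using hx
  have hsign (a : ℤ) (ha : a = 1 ∨ a = -1) : t * (a * ∑ x, quadraticChar F (f.eval x)) ≤
      3 * f.natDegree * t + (f.natDegree + 1) * Fintype.card F := by
    have hcount : ({x | quadraticChar F (f.eval x) = a} : Finset F).card * (2 * t) ≤
        2 * t * f.natDegree + (f.natDegree + 1 + t) * Fintype.card F :=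
      card_mul_le_of_eval_pow_eq hF hf0 hf ht hq (a := a) fun x hx => by
        rw [← quadraticChar_eq_pow_of_char_ne_two' hF, (Finset.mem_filter.1 hx).2]
    have hpointwise (x : F) : a * quadraticChar F (f.eval x) ≤
        2 * (if quadraticChar F (f.eval x) = a then 1 else 0) +
          (if f.eval x = 0 then 1 else 0) - 1 := by
      by_cases hx : f.eval x = 0
      · rcases ha with rfl | rfl <;> simp [hx]
      · rcases quadraticChar_dichotomy hx with h | h <;> rcases ha with rfl | rfl <;> simp [h, hx]
    have hsum : a * ∑ x, quadraticChar F (f.eval x) ≤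
        2 * ({x | quadraticChar F (f.eval x) = a} : Finset F).card +
          ({x | f.eval x = 0} : Finset F).card - Fintype.card F := by
      rw [Finset.mul_sum]
      refine (Finset.sum_le_sum fun x _ => hpointwise x).trans_eq ?_
      simp only [Finset.sum_sub_distrib, Finset.sum_add_distrib, ← Finset.mul_sum, Finset.sum_boole,
        Finset.sum_const, Finset.card_univ, nsmul_eq_mul, mul_one]
    zify at hcount hzero
    nlinarith
  rcases abs_choice (∑ x, quadraticChar F (f.eval x)) with h | h
  · rw [h]
    simpa only [one_mul] using hsign 1 (Or.inl rfl)
  · rw [h]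
    simpa only [neg_one_mul] using hsign (-1) (Or.inr rfl)

theorem mul_abs_sum_quadraticChar_eval_le [DecidableEq F] (hF : ringChar F ≠ 2) {f : F[X]}
    (hf : ∀ c g, f ≠ C c * g ^ 2) {t : ℕ} (ht : 2 * t ≤ ringChar F)
    (hq : 2 * (t * (2 * t * f.natDegree + t + 1)) + f.natDegree < Fintype.card F) :
    t * |∑ x, quadraticChar F (f.eval x)| ≤
      3 * f.natDegree * t + (f.natDegree + 1) * Fintype.card F := by
  obtain ⟨c, hc⟩ : ∃ c, f.eval c ≠ 0 := by
    refine exists_eval_ne_zero_of_natDegree_lt_card f (fun h => hf 0 0 (by simp [h])) ?_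
    rw [Cardinal.mk_fintype]
    exact_mod_cast (Nat.le_add_left _ _).trans_lt hq
  have htaylor (b : F) (g : F[X]) : taylor c f ≠ C b * g ^ 2 := fun h =>
    hf b (taylor (-c) g) <| by
      rw [← taylor_C (-c) b, ← taylor_pow, ← taylor_mul, ← h, taylor_taylor, neg_add_cancel,
        taylor_zero]
  have := mul_abs_sum_quadraticChar_eval_le_of_eval_zero_ne_zero (f := taylor c f) hF
    (by rwa [taylor_eval, zero_add]) htaylor ht (by rwa [natDegree_taylor])
  simp only [taylor_eval, natDegree_taylor] at this
  rwa [← Equiv.sum_comp (Equiv.addRight c) fun x => quadraticChar F (f.eval x)]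

end Stepanov

section Legendre

open Polynomial

/-- The Chowla property of a family of weights `w N : ℕ → ℝ` along `l`: the correlations
`N⁻¹ * ∑_{n < N} w N (n + i₁) ⋯ w N (n + iₖ)` with distinct shifts tend to zero. -/
def SatisfiesChowla (l : Filter ℕ) (w : ℕ → ℕ → ℝ) : Prop :=
  ∀ I : Finset ℕ, I.Nonempty →
    Tendsto (fun N : ℕ => (N : ℝ)⁻¹ * ∑ n ∈ Finset.range N, ∏ i ∈ I, w N (n + i)) l (nhds 0)

theorem abs_legendre_le_one (p n : ℕ) : |(legendre p n : ℝ)| ≤ 1 := by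
  rw [legendre]
  split_ifs <;> simp

theorem legendre_eq_quadraticChar (p : ℕ) [Fact p.Prime] (n : ℕ) :
    legendre p n = quadraticChar (ZMod p) n := by
  classical
  rw [legendre, quadraticChar_apply, quadraticCharFun]
  congr

theorem sum_range_natCast_zmod {M : Type*} [AddCommMonoid M] (n : ℕ) [NeZero n] (g : ZMod n → M) :
    ∑ i ∈ Finset.range n, g i = ∑ x, g x :=
  Finset.sum_bij' (fun i _ => i) (fun x _ => x.val) (fun _ _ => Finset.mem_univ _)
    (fun x _ => Finset.mem_range.2 x.val_lt)
    (fun _ hi => ZMod.val_cast_of_lt (Finset.mem_range.1 hi))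
    (fun x _ => ZMod.natCast_zmod_val x) fun _ _ => rfl

theorem mul_abs_sum_prod_legendre_le {p : ℕ} (hp : p.Prime) (hp2 : p ≠ 2) {I : Finset ℕ}
    (hI : I.Nonempty) (hIp : ∀ i ∈ I, i < p) {t : ℕ}
    (ht : 2 * (t * (2 * t * I.card + t + 1)) + I.card < p) :
    t * |∑ n ∈ Finset.range p, ∏ i ∈ I, legendre p (n + i)| ≤
      3 * I.card * t + (I.card + 1) * p := by
  have : Fact p.Prime := ⟨hp⟩
  set f : (ZMod p)[X] := ∏ i ∈ I, (X - C (-(i : ZMod p))) with hf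
  have hdeg : f.natDegree = I.card := natDegree_finsetProd_X_sub_C_eq_card I fun i => -(i : ZMod p)
  have hsq : Squarefree f := by
    refine (separable_prod_X_sub_C_iff'.2 fun i hi j hj hij => ?_).squarefree
    rw [neg_inj, ZMod.natCast_eq_natCast_iff] at hij
    exact hij.eq_of_lt_of_lt (hIp i hi) (hIp j hj)
  have hsum : ∑ n ∈ Finset.range p, ∏ i ∈ I, legendre p (n + i) =
      ∑ x, quadraticChar (ZMod p) (f.eval x) := by
    rw [← sum_range_natCast_zmod p fun x => quadraticChar (ZMod p) (f.eval x)]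
    simp only [legendre_eq_quadraticChar, hf, eval_prod, map_prod, eval_sub, eval_X, eval_C,
      sub_neg_eq_add, Nat.cast_add]
  have hchar : ringChar (ZMod p) = p := ZMod.ringChar_zmod_n p
  have := mul_abs_sum_quadraticChar_eval_le (f := f) (t := t) (by rwa [hchar])
    (ne_C_mul_sq_of_squarefree hsq (by rw [hdeg]; exact hI.card_ne_zero))
    (by rw [hchar]; nlinarith [t.zero_le, (t * (t * I.card)).zero_le]) (by rwa [hdeg, ZMod.card])
  rwa [hdeg, ZMod.card, ← hsum] at this

theorem satisfiesChowla_legendre :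
    SatisfiesChowla (atTop ⊓ 𝓟 {p | p.Prime ∧ p ≠ 2}) fun p n => legendre p n := by
  intro I hI
  rw [Metric.tendsto_nhds]
  intro ε hε
  obtain ⟨t, ht⟩ := exists_nat_gt (2 * (I.card + 1) / ε)
  have ht0 : (0 : ℝ) < t := lt_of_le_of_lt (by positivity) ht
  rw [eventually_inf_principal]
  filter_upwards [eventually_gt_atTop (2 * (t * (2 * t * I.card + t + 1)) + I.card),
    eventually_gt_atTop (I.sup id),
    tendsto_natCast_atTop_atTop.eventually_gt_atTop (6 * I.card / ε)]
    with p hpt hpI hpε ⟨hp, hp2⟩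
  have hp0 : (0 : ℝ) < p := by exact_mod_cast hp.pos
  have hbound := mul_abs_sum_prod_legendre_le hp hp2 hI
    (fun i hi => (Finset.le_sup (f := id) hi).trans_lt hpI) hpt
  rify at hbound
  rw [dist_zero_right, Real.norm_eq_abs, abs_mul, abs_of_pos (inv_pos.2 hp0), inv_mul_lt_iff₀ hp0]
  rw [div_lt_iff₀ hε] at ht hpε
  nlinarith

end Legendre

section Deterministic

variable {E : Type*} [PseudoMetricSpace E]

/-- A sequence is deterministic if, for every precision `δ`, its blocks of length `L` are
`δ`-covered by `exp (o (L))` of them: it is a sequence of zero entropy. -/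
def IsDeterministic (a : ℕ → E) : Prop :=
  ∀ δ > 0, ∀ c > 0, ∀ᶠ L : ℕ in atTop, ∃ S : Finset ℕ, (S.card : ℝ) ≤ Real.exp (c * L) ∧
    ∀ n, ∃ m ∈ S, ∀ i < L, dist (a (n + i)) (a (m + i)) ≤ δ

theorem IsDeterministic.uniformContinuous_comp {E' : Type*} [PseudoMetricSpace E'] {a : ℕ → E}
    (ha : IsDeterministic a) {g : E → E'} (hg : UniformContinuous g) :
    IsDeterministic fun n => g (a n) := by
  intro δ hδ c hc
  obtain ⟨η, hη, hg⟩ := Metric.uniformContinuous_iff.1 hg δ hδ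
  filter_upwards [ha (η / 2) (half_pos hη) c hc] with L ⟨S, hcard, hS⟩
  refine ⟨S, hcard, fun n => ?_⟩
  obtain ⟨m, hm, hdist⟩ := hS n
  exact ⟨m, hm, fun i hi => (hg ((hdist i hi).trans_lt (half_lt_self hη))).le⟩

theorem IsDeterministic.isBounded_range {a : ℕ → E} (ha : IsDeterministic a) :
    Bornology.IsBounded (Set.range a) := by
  obtain ⟨L, ⟨S, -, hS⟩, hL⟩ := ((ha 1 one_pos 1 one_pos).and (eventually_gt_atTop 0)).exists
  refine ((Bornology.isBounded_biUnion S.finite_toSet).2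
    fun m _ => Metric.isBounded_closedBall (x := a m) (r := 1)).subset ?_
  rintro _ ⟨n, rfl⟩
  obtain ⟨m, hm, hdist⟩ := hS n
  exact Set.mem_biUnion hm (hdist 0 hL)

theorem eventually_exists_isDynCoverOf_card_le_exp {X : Type*} [UniformSpace X] {f : X → X}
    {F : Set X} {c : ℝ} (h : Dynamics.coverEntropy f F < c) {U : SetRel X X}
    (hU : U ∈ uniformity X) : ∀ᶠ n : ℕ in atTop, ∃ s : Finset X,
      Dynamics.IsDynCoverOf f F U n s ∧ (s.card : ℝ) ≤ Real.exp (c * n) := by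
  filter_upwards [ExpGrowth.eventually_le_exp
    ((Dynamics.coverEntropyEntourage_le_coverEntropy f F hU).trans_lt h)] with n hn
  have hexp : EReal.exp (c * n) = ENNReal.ofReal (Real.exp (c * n)) := by
    rw [← EReal.exp_coe, EReal.coe_mul, EReal.coe_natCast]
  rw [hexp] at hn
  have hfin : Dynamics.coverMincard f F U n < ⊤ :=
    lt_top_iff_ne_top.2 fun h => by simp [h] at hn
  obtain ⟨s, hs, hcard⟩ := (Dynamics.coverMincard_finite_iff f F U n).1 hfin
  refine ⟨s, hs, ?_⟩
  rwa [← hcard, ENat.toENNReal_coe, ← ENNReal.ofReal_natCast,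
    ENNReal.ofReal_le_ofReal_iff (Real.exp_pos _).le] at hn

theorem isDeterministic_of_coverEntropy_nonpos {X : Type*} [UniformSpace X] {f : X → X} {x : X}
    (h : Dynamics.coverEntropy f (Set.range fun n => f^[n] x) ≤ 0) {φ : X → E}
    (hφ : UniformContinuous φ) : IsDeterministic fun n => φ (f^[n] x) := by
  classical
  intro δ hδ c hc
  have hU := hφ (Metric.dist_mem_uniformity (half_pos hδ))
  filter_upwards [eventually_exists_isDynCoverOf_card_le_exp
    (h.trans_lt (EReal.coe_pos.2 hc)) hU] with L ⟨s, hcover, hcard⟩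
  -- The centres of the cover need not lie on the orbit, so each is replaced by a time at which the
  -- orbit shadows it.
  have hstart (y : X) : ∃ m : ℕ, ∀ n, (∀ i < L, dist (φ (f^[n + i] x)) (φ (f^[i] y)) < δ / 2) →
      ∀ i < L, dist (φ (f^[m + i] x)) (φ (f^[i] y)) < δ / 2 := by
    by_cases hy : ∃ m, ∀ i < L, dist (φ (f^[m + i] x)) (φ (f^[i] y)) < δ / 2
    · exact hy.imp fun m hm _ _ => hm
    · exact ⟨0, fun n hn => absurd ⟨n, hn⟩ hy⟩
  choose start hstart using hstart
  refine ⟨s.image start, (Nat.cast_le.2 Finset.card_image_le).trans hcard, fun n => ?_⟩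
  obtain ⟨y, hy, hny⟩ := hcover (Set.mem_range_self n)
  have hn (i : ℕ) (hi : i < L) : dist (φ (f^[n + i] x)) (φ (f^[i] y)) < δ / 2 := by
    rw [add_comm, Function.iterate_add_apply]
    exact Dynamics.mem_dynEntourage.1 hny i hi
  refine ⟨start y, Finset.mem_image_of_mem start hy, fun i hi => ?_⟩
  linarith [dist_triangle_right (φ (f^[n + i] x)) (φ (f^[start y + i] x)) (φ (f^[i] y)), hn i hi,
    hstart y n hn i hi]

end Deterministic

section ChowlaSarnak

variable {l : Filter ℕ} {w : ℕ → ℕ → ℝ}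

theorem SatisfiesChowla.tendsto_sum_prod_mul_add
    (hw : SatisfiesChowla l w) (hl : l ≤ atTop) (a b : ℕ → ℝ) (s : Finset ℕ) :
    Tendsto (fun N : ℕ => (N : ℝ)⁻¹ *
      ∑ n ∈ Finset.range N, ∏ i ∈ s, (w N (n + i) * a i + b i)) l (nhds (∏ i ∈ s, b i)) := by
  have hexpand (N : ℕ) : (N : ℝ)⁻¹ * ∑ n ∈ Finset.range N, ∏ i ∈ s, (w N (n + i) * a i + b i) =
      ∑ I ∈ s.powerset, ((∏ i ∈ I, a i) * ∏ i ∈ s \ I, b i) *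
        ((N : ℝ)⁻¹ * ∑ n ∈ Finset.range N, ∏ i ∈ I, w N (n + i)) := by
    simp only [Finset.prod_add, Finset.prod_mul_distrib, Finset.mul_sum]
    rw [Finset.sum_comm]
    exact Finset.sum_congr rfl fun I _ => Finset.sum_congr rfl fun n _ => by ring
  have hcorr (I : Finset ℕ) : Tendsto (fun N : ℕ => (N : ℝ)⁻¹ *
      ∑ n ∈ Finset.range N, ∏ i ∈ I, w N (n + i)) l (nhds (if I = ∅ then 1 else 0)) := by
    split_ifs with hI
    · have hne : ∀ᶠ N : ℕ in l, N ≠ 0 := hl (eventually_ne_atTop 0)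
      refine tendsto_const_nhds.congr' (hne.mono fun N hN => ?_)
      simp [hI, hN]
    · exact hw I (Finset.nonempty_iff_ne_empty.2 hI)
  have hlim := tendsto_finsetSum s.powerset fun I _ =>
    (hcorr I).const_mul ((∏ i ∈ I, a i) * ∏ i ∈ s \ I, b i)
  simpa only [hexpand, mul_ite, mul_one, mul_zero, Finset.sum_ite_eq', Finset.empty_mem_powerset,
    if_true, Finset.prod_empty, one_mul, Finset.sdiff_empty] using hlim

theorem SatisfiesChowla.eventually_sum_exp_le
    (hw : SatisfiesChowla l w) (hl : l ≤ atTop) (hw1 : ∀ N n, |w N n| ≤ 1) (s : Finset ℕ)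
    (c : ℕ → ℝ) : ∀ᶠ N : ℕ in l, ∑ n ∈ Finset.range N, Real.exp (∑ i ∈ s, w N (n + i) * c i) ≤
      N * (2 * ∏ i ∈ s, Real.cosh (c i)) := by
  -- Convexity gives `exp (w * c) ≤ cosh c + w * sinh c`, linear in `w`, which turns the exponential
  -- moment into correlations.
  have hprod : 0 < ∏ i ∈ s, Real.cosh (c i) := Finset.prod_pos fun i _ => Real.cosh_pos _
  have hpos : ∀ᶠ N : ℕ in l, 0 < N := hl (eventually_gt_atTop 0)
  filter_upwards [hpos, (hw.tendsto_sum_prod_mul_add hl (fun i => Real.sinh (c i))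
    (fun i => Real.cosh (c i)) s).eventually_le_const
      (lt_mul_of_one_lt_left hprod one_lt_two)] with N hN hle
  rw [inv_mul_le_iff₀ (Nat.cast_pos.2 hN)] at hle
  refine (Finset.sum_le_sum fun n _ => ?_).trans hle
  rw [Real.exp_sum]
  gcongr with i
  rw [add_comm (_ * _)]
  exact Real.exp_mul_le_cosh_add_mul_sinh (hw1 _ _) _

theorem prod_cosh_le {ι : Type*} {s : Finset ι} {c : ι → ℝ} {C : ℝ} (hc : ∀ i ∈ s, |c i| ≤ C) :
    ∏ i ∈ s, Real.cosh (c i) ≤ Real.exp (s.card * (C ^ 2 / 2)) := by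
  rw [Real.exp_nat_mul, ← Finset.prod_const]
  refine Finset.prod_le_prod (fun i _ => (Real.cosh_pos _).le) fun i hi =>
    (Real.cosh_le_exp_half_sq _).trans ?_
  gcongr Real.exp (?_ / 2)
  exact sq_le_sq' (abs_le.1 (hc i hi)).1 (abs_le.1 (hc i hi)).2

theorem sum_le_card_mul_log_of_sum_exp_le {ι κ : Type*} {T : Finset ι} {S : Finset κ}
    {v : κ → ι → ℝ} {K : ℝ} (hK : 0 < K)
    (hv : ∀ k ∈ S, ∑ n ∈ T, Real.exp (v k n) ≤ T.card * K) {y : ι → κ} (hy : ∀ n ∈ T, y n ∈ S) :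
    ∑ n ∈ T, v (y n) n ≤ T.card * Real.log (S.card * K) := by
  rcases T.eq_empty_or_nonempty with rfl | ⟨n₀, hn₀⟩
  · simp
  have hA : 0 < S.card * K := by
    have := Finset.card_pos.2 ⟨y n₀, hy n₀ hn₀⟩
    positivity
  have hsum : ∑ n ∈ T, Real.exp (v (y n) n) ≤ T.card * (S.card * K) := calc
    _ ≤ ∑ n ∈ T, ∑ k ∈ S, Real.exp (v k n) := Finset.sum_le_sum fun n hn =>
        Finset.single_le_sum (f := fun k => Real.exp (v k n)) (fun _ _ => (Real.exp_pos _).le)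
          (hy n hn)
    _ = ∑ k ∈ S, ∑ n ∈ T, Real.exp (v k n) := Finset.sum_comm
    _ ≤ ∑ _k ∈ S, T.card * K := Finset.sum_le_sum hv
    _ = T.card * (S.card * K) := by
        rw [Finset.sum_const, nsmul_eq_mul]
        ring
  have hlog : ∑ n ∈ T, (v (y n) n - Real.log (S.card * K) + 1) ≤ T.card := calc
    _ ≤ ∑ n ∈ T, Real.exp (v (y n) n) / (S.card * K) := Finset.sum_le_sum fun n _ => by
        rw [← Real.exp_log hA, ← Real.exp_sub, Real.log_exp]
        exact Real.add_one_le_exp _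
    _ ≤ T.card := by
        rw [← Finset.sum_div]
        exact (div_le_iff₀ hA).2 hsum
  rw [Finset.sum_add_distrib, Finset.sum_sub_distrib, Finset.sum_const, Finset.sum_const,
    nsmul_eq_mul, nsmul_eq_mul] at hlog
  linarith

theorem mul_sum_sum_mul_le {L N : ℕ} {β δ K : ℝ} {w a : ℕ → ℝ} {S : Finset ℕ} (hβ : 0 ≤ β)
    (hw : ∀ n, |w n| ≤ 1) (hS : ∀ n, ∃ m ∈ S, ∀ i < L, dist (a (n + i)) (a (m + i)) ≤ δ)
    (hK : 0 < K) (hexp : ∀ m ∈ S, ∑ n ∈ Finset.range N,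
      Real.exp (∑ i ∈ Finset.range L, w (n + i) * (β * a (m + i))) ≤ N * K) :
    β * ∑ n ∈ Finset.range N, ∑ i ∈ Finset.range L, w (n + i) * a (n + i) ≤
      N * (β * (L * δ) + Real.log (S.card * K)) := by
  choose y hyS hy using hS
  have hchernoff : ∑ n ∈ Finset.range N, ∑ i ∈ Finset.range L, w (n + i) * (β * a (y n + i)) ≤
      N * Real.log (S.card * K) := by
    simpa only [Finset.card_range] using sum_le_card_mul_log_of_sum_exp_le (T := Finset.range N)
      (v := fun m n => ∑ i ∈ Finset.range L, w (n + i) * (β * a (m + i))) hK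
      (by simpa only [Finset.card_range] using hexp) fun n _ => hyS n
  have happrox (n : ℕ) : β * ∑ i ∈ Finset.range L, w (n + i) * a (n + i) ≤
      ∑ i ∈ Finset.range L, w (n + i) * (β * a (y n + i)) + β * (L * δ) := by
    have hterm (i : ℕ) (hi : i ∈ Finset.range L) :
        w (n + i) * a (n + i) ≤ w (n + i) * a (y n + i) + δ := by
      have hdist := hy n i (Finset.mem_range.1 hi)
      rw [Real.dist_eq] at hdist
      rw [← sub_le_iff_le_add', ← mul_sub]
      refine (le_abs_self _).trans ?_
      rw [abs_mul]
      exact (mul_le_of_le_one_left (abs_nonneg _) (hw _)).trans hdist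
    refine (mul_le_mul_of_nonneg_left (Finset.sum_le_sum hterm) hβ).trans_eq ?_
    rw [Finset.sum_add_distrib, Finset.sum_const, Finset.card_range, nsmul_eq_mul, mul_add,
      Finset.mul_sum]
    simp only [mul_left_comm β]
  rw [Finset.mul_sum]
  refine (Finset.sum_le_sum fun n _ => happrox n).trans ?_
  rw [Finset.sum_add_distrib, Finset.sum_const, Finset.card_range, nsmul_eq_mul, mul_add]
  linarith

theorem SatisfiesChowla.eventually_sum_exp_le_exp
    (hw : SatisfiesChowla l w) (hl : l ≤ atTop) (hw1 : ∀ N n, |w N n| ≤ 1) {s : Finset ℕ}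
    {c : ℕ → ℝ} {C : ℝ} (hc : ∀ i ∈ s, |c i| ≤ C) :
    ∀ᶠ N : ℕ in l, ∑ n ∈ Finset.range N, Real.exp (∑ i ∈ s, w N (n + i) * c i) ≤
      N * (2 * Real.exp (s.card * (C ^ 2 / 2))) := by
  refine (hw.eventually_sum_exp_le hl hw1 s c).mono fun N hN => hN.trans ?_
  gcongr
  exact prod_cosh_le hc

theorem SatisfiesChowla.exists_eventually_sum_sum_mul_le
    (hw : SatisfiesChowla l w) (hl : l ≤ atTop) (hw1 : ∀ N n, |w N n| ≤ 1) {a : ℕ → ℝ}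
    (ha : IsDeterministic a) {ε : ℝ} (hε : 0 < ε) : ∃ L : ℕ, 0 < L ∧ ∀ᶠ N : ℕ in l,
      ∑ n ∈ Finset.range N, ∑ i ∈ Finset.range L, w N (n + i) * a (n + i) ≤ N * (L * ε) := by
  obtain ⟨B, hB, haB⟩ := ha.isBounded_range.exists_pos_norm_le
  -- `β` balances the entropy `log (#S) ≤ c * L` against the variance term `L * (β * B) ^ 2 / 2`.
  set β := ε / (2 * B ^ 2) with hβdef
  have hβ : 0 < β := by positivity
  set c := β * ε / 4 with hcdef
  have hc : 0 < c := by positivity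
  obtain ⟨L, ⟨S, hcard, hS⟩, hLlog, hL⟩ := ((ha (ε / 4) (by positivity) c hc).and
    ((tendsto_natCast_atTop_atTop.eventually_ge_atTop (Real.log 2 / c)).and
      (eventually_gt_atTop 0))).exists
  set K := 2 * Real.exp (L * ((β * B) ^ 2 / 2)) with hKdef
  have hlog : Real.log (S.card * K) ≤ L * (3 * c) := by
    obtain ⟨m, hm, -⟩ := hS 0
    have hScard : (0 : ℝ) < S.card := Nat.cast_pos.2 (Finset.card_pos.2 ⟨m, hm⟩)
    have hlogS := (Real.log_le_iff_le_exp hScard).2 hcard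
    have hβB : (β * B) ^ 2 / 2 = c := by
      rw [hcdef, hβdef]
      field_simp
      ring
    rw [hKdef, Real.log_mul hScard.ne' (by positivity), Real.log_mul two_ne_zero (by positivity),
      Real.log_exp, hβB]
    linarith [(div_le_iff₀ hc).1 hLlog]
  have hexp (m : ℕ) : ∀ᶠ N : ℕ in l, ∑ n ∈ Finset.range N,
      Real.exp (∑ i ∈ Finset.range L, w N (n + i) * (β * a (m + i))) ≤ N * K := by
    have hβa (i : ℕ) : |β * a (m + i)| ≤ β * B := by
      rw [abs_mul, abs_of_pos hβ]
      exact mul_le_mul_of_nonneg_left (haB _ (Set.mem_range_self _)) hβ.le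
    simpa only [Finset.card_range] using
      hw.eventually_sum_exp_le_exp hl hw1 (s := Finset.range L) fun i _ => hβa i
  refine ⟨L, hL, ?_⟩
  filter_upwards [(eventually_all_finset S).2 fun m _ => hexp m] with N hN
  refine le_of_mul_le_mul_left ?_ hβ
  calc _ ≤ N * (β * (L * (ε / 4)) + Real.log (S.card * K)) :=
        mul_sum_sum_mul_le hβ.le (hw1 N) hS (by positivity) hN
    _ ≤ N * (β * (L * (ε / 4)) + L * (3 * c)) := by gcongr
    _ = β * (N * (L * ε)) := by
        rw [hcdef]
        ring

theorem sum_range_le_sum_range_add {g : ℕ → ℝ} {B : ℝ} (hg : ∀ n, |g n| ≤ B) (N k : ℕ) :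
    ∑ n ∈ Finset.range N, g n ≤ ∑ n ∈ Finset.range N, g (n + k) + 2 * k * B := by
  have hsum (h : ℕ → ℝ) (hh : ∀ n, |h n| ≤ B) : |∑ n ∈ Finset.range k, h n| ≤ k * B := by
    refine (Finset.abs_sum_le_sum_abs _ _).trans ((Finset.sum_le_card_nsmul _ _ B
      fun n _ => hh n).trans_eq ?_)
    rw [Finset.card_range, nsmul_eq_mul]
  have hsplit : ∑ n ∈ Finset.range N, g n + ∑ n ∈ Finset.range k, g (N + n) =
      ∑ n ∈ Finset.range k, g n + ∑ n ∈ Finset.range N, g (n + k) := by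
    simp only [← Finset.sum_range_add, add_comm _ k]
  linarith [abs_le.1 (hsum g hg), abs_le.1 (hsum (fun n => g (N + n)) fun _ => hg _)]

theorem mul_sum_range_le_sum_sum_range_add {g : ℕ → ℝ} {B : ℝ} (hg : ∀ n, |g n| ≤ B) (N L : ℕ) :
    L * ∑ n ∈ Finset.range N, g n ≤
      ∑ n ∈ Finset.range N, ∑ i ∈ Finset.range L, g (n + i) + L * (2 * L * B) := by
  have hB : 0 ≤ B := (abs_nonneg _).trans (hg 0)
  calc L * ∑ n ∈ Finset.range N, g n
      = ∑ _i ∈ Finset.range L, ∑ n ∈ Finset.range N, g n := by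
        rw [Finset.sum_const, Finset.card_range, nsmul_eq_mul]
    _ ≤ ∑ i ∈ Finset.range L, (∑ n ∈ Finset.range N, g (n + i) + 2 * L * B) :=
        Finset.sum_le_sum fun i hi => (sum_range_le_sum_range_add hg N i).trans <| by
          gcongr
          exact (Finset.mem_range.1 hi).le
    _ = _ := by
        rw [Finset.sum_add_distrib, Finset.sum_comm, Finset.sum_const, Finset.card_range,
          nsmul_eq_mul]

theorem SatisfiesChowla.eventually_sum_mul_le
    (hw : SatisfiesChowla l w) (hl : l ≤ atTop) (hw1 : ∀ N n, |w N n| ≤ 1) {a : ℕ → ℝ}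
    (ha : IsDeterministic a) {ε : ℝ} (hε : 0 < ε) :
    ∀ᶠ N : ℕ in l, ∑ n ∈ Finset.range N, w N n * a n ≤ N * ε := by
  obtain ⟨B, -, haB⟩ := ha.isBounded_range.exists_pos_norm_le
  obtain ⟨L, hL, hblock⟩ := hw.exists_eventually_sum_sum_mul_le hl hw1 ha (half_pos hε)
  have hlarge : ∀ᶠ N : ℕ in l, 2 * L * B / (ε / 2) ≤ N :=
    hl (tendsto_natCast_atTop_atTop.eventually_ge_atTop _)
  filter_upwards [hblock, hlarge] with N hN hNL
  have hwa (n : ℕ) : |w N n * a n| ≤ B := by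
    rw [abs_mul]
    exact (mul_le_of_le_one_left (abs_nonneg _) (hw1 N n)).trans (haB _ (Set.mem_range_self n))
  refine le_of_mul_le_mul_left ?_ (Nat.cast_pos.2 hL : (0 : ℝ) < L)
  calc _ ≤ _ := mul_sum_range_le_sum_sum_range_add hwa N L
    _ ≤ N * (L * (ε / 2)) + L * (N * (ε / 2)) := by
        exact add_le_add hN
          (mul_le_mul_of_nonneg_left ((div_le_iff₀ (half_pos hε)).1 hNL) L.cast_nonneg)
    _ = L * (N * ε) := by ring

theorem SatisfiesChowla.tendsto_sum_mul_real
    (hw : SatisfiesChowla l w) (hl : l ≤ atTop) (hw1 : ∀ N n, |w N n| ≤ 1) {a : ℕ → ℝ}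
    (ha : IsDeterministic a) :
    Tendsto (fun N : ℕ => (N : ℝ)⁻¹ * ∑ n ∈ Finset.range N, w N n * a n) l (nhds 0) := by
  rw [Metric.tendsto_nhds]
  intro ε hε
  have hpos : ∀ᶠ N : ℕ in l, 0 < N := hl (eventually_gt_atTop 0)
  filter_upwards [hpos, hw.eventually_sum_mul_le hl hw1 ha (half_pos hε),
    hw.eventually_sum_mul_le hl hw1 (ha.uniformContinuous_comp uniformContinuous_neg)
      (half_pos hε)] with N hN hle hneg
  simp only [mul_neg, Finset.sum_neg_distrib] at hneg
  have hN : (0 : ℝ) < N := Nat.cast_pos.2 hN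
  rw [dist_zero_right, Real.norm_eq_abs, abs_mul, abs_of_pos (inv_pos.2 hN), inv_mul_lt_iff₀ hN]
  refine (abs_le'.2 ⟨hle, hneg⟩).trans_lt ?_
  gcongr
  exact half_lt_self hε

theorem SatisfiesChowla.tendsto_sum_mul_complex
    (hw : SatisfiesChowla l w) (hl : l ≤ atTop) (hw1 : ∀ N n, |w N n| ≤ 1) {a : ℕ → ℂ}
    (ha : IsDeterministic a) :
    Tendsto (fun N : ℕ => (N : ℂ)⁻¹ * ∑ n ∈ Finset.range N, (w N n : ℂ) * a n) l (nhds 0) := by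
  have hre := hw.tendsto_sum_mul_real hl hw1
    (ha.uniformContinuous_comp Complex.uniformContinuous_re)
  have him := hw.tendsto_sum_mul_real hl hw1
    (ha.uniformContinuous_comp Complex.uniformContinuous_im)
  have h := hre.ofReal.add (him.ofReal.mul_const Complex.I)
  rw [Complex.ofReal_zero, zero_mul, add_zero] at h
  refine h.congr fun N => ?_
  push_cast
  rw [mul_assoc, ← mul_add, Finset.sum_mul, ← Finset.sum_add_distrib]
  simp only [mul_assoc, ← mul_add, Complex.re_add_im]

end ChowlaSarnak

theorem legendre_sarnak_general {X : Type*} [UniformSpace X] (f : X → X) (x : X)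
    (hent : Dynamics.coverEntropy f (Set.range fun n => f^[n] x) ≤ 0) (φ : X → ℂ)
    (hφ : UniformContinuous φ) :
    Tendsto (fun p : ℕ => (p : ℂ)⁻¹ * ∑ n ∈ Finset.range p, (legendre p n : ℂ) * φ (f^[n] x))
      (atTop ⊓ 𝓟 {p : ℕ | p.Prime ∧ p ≠ 2}) (nhds 0) := by
  simpa only [Complex.ofReal_intCast] using
    satisfiesChowla_legendre.tendsto_sum_mul_complex inf_le_left abs_legendre_le_one
      (isDeterministic_of_coverEntropy_nonpos hent hφ)

/-- For a compact metric space `X` and a continuous map `f : X → X` of zero topological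
entropy, for every continuous `φ : X → ℂ` and every `x ∈ X`, the averages
`(1/p) ∑_{0 ≤ n < p} (n/p) φ(fⁿ(x))` converge to `0` as `p → ∞` over the odd primes. -/
theorem legendre_sarnak
    (X : Type) [MetricSpace X] [CompactSpace X] (f : X → X) (hf : Continuous f)
    (hent : Dynamics.coverEntropy f Set.univ = 0)
    (φ : X → ℂ) (hφ : Continuous φ) (x : X) :
    Tendsto (fun p : ℕ => (p : ℂ)⁻¹ * ∑ n ∈ Finset.range p, (legendre p n : ℂ) * φ (f^[n] x))
      (atTop ⊓ 𝓟 {p : ℕ | p.Prime ∧ p ≠ 2}) (nhds 0) :=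
  legendre_sarnak_general f x
    ((Dynamics.coverEntropy_monotone f (Set.subset_univ _)).trans hent.le) φ
    (CompactSpace.uniformContinuous_of_continuous hφ)
end

section
/- There exists a sequence (a_p), indexed by the primes, of integers with 0 ≤ a_p < p for every prime p, such that for Lebesgue-almost every θ ∈ [0,1] there exist infinitely many primes p with |θ − a_p/p| ≤ 1/(100p). -/
open MeasureTheory

/-! Put the half-open intervals of length `1/p` end to end around the circle `ℝ/ℤ`. Since `∑ 1/p`
diverges they wind around infinitely often, so every `θ ∈ (0,1)` lies in infinitely many of them;
rounding the left end of the `p`-th one down to a multiple `a_p/p` of `1/p` gives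
`|θ - a_p/p| ≤ 2/p` for infinitely many `p`. By a theorem of Cassels, a consequence of Lebesgue's
density theorem, multiplying all radii by a positive constant changes the limsup of a sequence of
balls only by a null set, so the constant `2` may be replaced by any `δ > 0`.
-/

open Filter Set Topology

section Cassels

variable {α : Type*} [PseudoMetricSpace α] [SecondCountableTopology α] [MeasurableSpace α]
  [BorelSpace α] (μ : Measure α) [IsLocallyFiniteMeasure μ] [IsUnifLocDoublingMeasure μ]
  (S : Set ℕ) (x : ℕ → α) {r : ℕ → ℝ}

lemma ae_infinite_dist_le_mul_iff (hr₀ : 0 ≤ r) (hr : Tendsto r atTop (𝓝 0)) {δ : ℝ}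
    (hδ : 0 < δ) :
    ∀ᵐ y ∂μ, {n ∈ S | dist y (x n) ≤ δ * r n}.Infinite ↔ {n ∈ S | dist y (x n) ≤ r n}.Infinite := by
  have hcassels := blimsup_cthickening_mul_ae_eq μ (· ∈ S) (fun n ↦ {x n}) hδ r hr
  have hball (n : ℕ) : Metric.cthickening (r n) {x n} = Metric.closedBall (x n) (r n) :=
    Metric.cthickening_singleton _ (hr₀ n)
  have hball_mul (n : ℕ) :
      Metric.cthickening (δ * r n) {x n} = Metric.closedBall (x n) (δ * r n) :=
    Metric.cthickening_singleton _ (mul_nonneg hδ.le (hr₀ n))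
  simp only [hball, hball_mul, ← Nat.cofinite_eq_atTop, cofinite.blimsup_set_eq] at hcassels
  exact hcassels.mem_iff

lemma ae_forall_pos_infinite_dist_le_mul (hr₀ : 0 ≤ r) (hr : Tendsto r atTop (𝓝 0)) :
    ∀ᵐ y ∂μ, {n ∈ S | dist y (x n) ≤ r n}.Infinite →
      ∀ δ > 0, {n ∈ S | dist y (x n) ≤ δ * r n}.Infinite := by
  have hrat : ∀ᵐ y ∂μ, ∀ k : ℕ, {n ∈ S | dist y (x n) ≤ 1 / (k + 1 : ℝ) * r n}.Infinite ↔
      {n ∈ S | dist y (x n) ≤ r n}.Infinite :=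
    ae_all_iff.2 fun k ↦ ae_infinite_dist_le_mul_iff μ S x hr₀ hr Nat.one_div_pos_of_nat
  filter_upwards [hrat] with y hy hinf δ hδ
  obtain ⟨k, hk⟩ := exists_nat_one_div_lt hδ
  refine ((hy k).2 hinf).mono fun n hn ↦ ⟨hn.1, hn.2.trans ?_⟩
  exact mul_le_mul_of_nonneg_right hk.le (hr₀ n)

end Cassels

lemma exists_mem_Ico_succ_of_tendsto_atTop {β : Type*} [LinearOrder β] [NoMaxOrder β] {s : ℕ → β}
    (hs : Tendsto s atTop atTop) {N : ℕ} {y : β} (hy : s N ≤ y) :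
    ∃ n ≥ N, y ∈ Ico (s n) (s (n + 1)) := by
  by_contra! hskip
  have hle : ∀ n ≥ N, s n ≤ y := Nat.le_induction hy fun n hn ih ↦
    not_lt.1 fun hlt ↦ hskip n hn ⟨ih, hlt⟩
  obtain ⟨n, hn, hlt⟩ := ((eventually_ge_atTop N).and (hs.eventually_gt_atTop y)).exists
  exact (hle n hn).not_gt hlt

lemma frequently_mem_Ico_fract {s : ℕ → ℝ} (hs : Tendsto s atTop atTop)
    (hgap : Tendsto (fun n ↦ s (n + 1) - s n) atTop (𝓝 0)) {θ : ℝ} (hθ : θ ∈ Ioo 0 1) :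
    ∃ᶠ n in atTop, θ ∈ Ico (Int.fract (s n)) (Int.fract (s n) + (s (n + 1) - s n)) := by
  -- A step shorter than `θ` that crosses `m + θ` starts after the integer `m`.
  obtain ⟨N₀, hshort⟩ := eventually_atTop.1 (hgap.eventually_lt_const hθ.1)
  refine frequently_atTop.2 fun N₁ ↦ ?_
  obtain ⟨m, hm⟩ := exists_nat_ge (s (max N₀ N₁))
  obtain ⟨n, hn, hle, hlt⟩ := exists_mem_Ico_succ_of_tendsto_atTop hs
    (hm.trans (le_add_of_nonneg_right hθ.1.le))
  have hgap_lt : s (n + 1) - s n < θ := hshort n (le_of_max_le_left hn)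
  have hfract : Int.fract (s n) = s n - m :=
    Int.fract_eq_iff.2 ⟨by linarith, by linarith [hθ.2], m, by simp⟩
  refine ⟨n, le_of_max_le_right hn, ?_⟩
  rw [hfract]
  constructor <;> linarith

lemma abs_sub_floor_mul_div_le {K : Type*} [Field K] [LinearOrder K] [IsStrictOrderedRing K]
    [FloorSemiring K] {t : K} (ht : 0 ≤ t) {n : ℕ} (hn : n ≠ 0) :
    |t - (⌊n * t⌋₊ : K) / n| ≤ 1 / n := by
  have hn' : (0 : K) < n := by positivity
  rw [← mul_div_cancel_left₀ t hn'.ne', ← sub_div, abs_div, abs_of_pos hn',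
    mul_div_cancel_left₀ t hn'.ne']
  gcongr
  exact Nat.abs_sub_floor_le (by positivity)

lemma exists_numerators_infinite_abs_sub_le {S : Set ℕ}
    (hS : ¬ Summable (S.indicator fun n : ℕ ↦ (1 : ℝ) / n)) :
    ∃ a : ℕ → ℕ, (∀ n ≠ 0, a n < n) ∧
      ∀ θ ∈ Ioo (0 : ℝ) 1, {n ∈ S | |θ - (a n : ℝ) / n| ≤ 2 / n}.Infinite := by
  set r : ℕ → ℝ := S.indicator fun n ↦ 1 / n
  set s : ℕ → ℝ := fun n ↦ ∑ i ∈ Finset.range n, r i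
  have hr₀ (n : ℕ) : 0 ≤ r n := indicator_nonneg (fun _ _ ↦ by positivity) n
  have hs : Tendsto s atTop atTop := (not_summable_iff_tendsto_nat_atTop_of_nonneg hr₀).1 hS
  have hgap (n : ℕ) : s (n + 1) - s n = r n := Finset.sum_range_succ_sub_sum r
  have hr_lim : Tendsto r atTop (𝓝 0) :=
    squeeze_zero hr₀ (indicator_le_self' fun _ _ ↦ by positivity)
      tendsto_one_div_atTop_nhds_zero_nat
  refine ⟨fun n ↦ ⌊n * Int.fract (s n)⌋₊, fun n hn ↦ ?_, fun θ hθ ↦ ?_⟩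
  · rw [Nat.floor_lt' hn]
    exact mul_lt_of_lt_one_right (by positivity) (Int.fract_lt_one _)
  · refine Nat.frequently_atTop_iff_infinite.1 ?_
    refine (frequently_mem_Ico_fract hs (by simpa only [hgap] using hr_lim) hθ).mono fun n hn ↦ ?_
    rw [hgap] at hn
    have hrn : r n ≠ 0 := fun h ↦ by simp [h] at hn
    have hnS : n ∈ S := mem_of_indicator_ne_zero hrn
    have hrn_eq : r n = 1 / n := indicator_of_mem hnS _
    have hn₀ : n ≠ 0 := by
      rintro rfl
      simp [hrn_eq] at hrn
    have hround := abs_sub_floor_mul_div_le (Int.fract_nonneg (s n)) hn₀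
    have hsweep : |θ - Int.fract (s n)| ≤ 1 / n :=
      abs_le.2 ⟨by linarith [hn.1, hr₀ n], by linarith [hn.2]⟩
    refine ⟨hnS, (abs_sub_le _ (Int.fract (s n)) _).trans ?_⟩
    linarith [add_div (1 : ℝ) 1 n]

theorem exists_good_prime_approximations_general {S : Set ℕ}
    (hS : ¬ Summable (S.indicator fun n : ℕ ↦ (1 : ℝ) / n)) :
    ∃ a : ℕ → ℕ, (∀ n ≠ 0, a n < n) ∧
      ∀ᵐ θ ∂(volume.restrict (Icc (0 : ℝ) 1)),
        ∀ δ > 0, {n ∈ S | |θ - (a n : ℝ) / n| ≤ δ / n}.Infinite := by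
  obtain ⟨a, ha, happrox⟩ := exists_numerators_infinite_abs_sub_le hS
  have hshrink := ae_forall_pos_infinite_dist_le_mul volume S (fun n ↦ (a n : ℝ) / n)
    (r := fun n ↦ 2 / n) (fun n ↦ by positivity) (tendsto_const_div_atTop_nhds_zero_nat 2)
  refine ⟨a, ha, ?_⟩
  rw [← restrict_Ioo_eq_restrict_Icc]
  filter_upwards [ae_restrict_mem measurableSet_Ioo, ae_restrict_of_ae hshrink] with θ hθ hmul δ hδ
  have hscale (n : ℕ) : δ / 2 * (2 / n) = δ / n := by ring
  simpa only [Real.dist_eq, hscale] using hmul (happrox θ hθ) (δ / 2) (half_pos hδ)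

/-- There is a family of integers `(a_p)` with `0 ≤ a_p < p` for every prime `p` such that
for Lebesgue-almost every `θ ∈ [0,1]` there are infinitely many primes `p` with
`|θ - a_p/p| ≤ 1/(100p)`. -/
theorem exists_good_prime_approximations :
    ∃ a : ℕ → ℕ, (∀ p : ℕ, p.Prime → a p < p) ∧
      ∀ᵐ θ ∂(volume.restrict (Set.Icc (0:ℝ) 1)),
        {p : ℕ | p.Prime ∧ |θ - (a p : ℝ) / p| ≤ 1 / (100 * p)}.Infinite := by
  obtain ⟨a, ha, happrox⟩ := exists_good_prime_approximations_general not_summable_one_div_on_primes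
  exact ⟨a, fun p hp ↦ ha p hp.ne_zero, happrox.mono fun θ hθ ↦ by
    simpa only [mem_ofPred_eq, div_div] using hθ (1 / 100) (by norm_num)⟩
end

section
/- Let P be a set of primes and, for each p ∈ P, let τ_p : {0,…,p−1} → ℂ be a function. Then for every finitely supported ϖ : ℤ → ℂ, ∑_{k ∈ ℤ} ∑_{p ∈ P} | (1/p) ∑_{0 ≤ n < p} τ_p(n) ϖ(n+k) |² ≤ ( ∑_{p ∈ P} ( sup_{θ ∈ [0,1]} | (1/p) ∑_{0 ≤ n < p} τ_p(n) e(nθ) | )² ) · ∑_{k ∈ ℤ} |ϖ(k)|². -/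
open Filter MeasureTheory ENNReal

/-- `e(z) = exp(2πiz)`. -/
noncomputable def e (z : ℝ) : ℂ := Complex.exp (2 * Real.pi * Complex.I * z)

/-!
Multiplying a square-integrable function on the circle by `∑ₙ aₙ e(νₙ x)` convolves its Fourier
coefficients with the weights `aₙ` placed at the frequencies `νₙ`. By Parseval this convolution has
`ℓ²` operator norm at most the supremum of the multiplier, and correlation is convolution after
reflecting `ℤ`. Each output value involves finitely many input values, so testing on trigonometric
polynomials suffices, and the bounds for the individual multipliers are then summed.
-/

section AddCircle

open AddCircle

variable {T : ℝ} {E κ : Type*} [NormedAddCommGroup E] [NormedSpace ℂ E]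

/-- The trigonometric polynomial with weight `a n` at the frequency `ν n`, for `n ∈ s`; it
serves both as a Fourier multiplier and as a finitely supported test function. The frequencies may
coincide. -/
noncomputable def trigPoly (s : Finset κ) (ν : κ → ℤ) (a : κ → ℂ) : C(AddCircle T, ℂ) :=
  ∑ n ∈ s, a n • fourier (ν n)

variable [Fact (0 < T)]

theorem tsum_enorm_sq_fourierCoeff {f : AddCircle T → ℂ} (hf : MemLp f 2 haarAddCircle) :
    ∑' k, ‖fourierCoeff f k‖ₑ ^ 2 = eLpNorm f 2 haarAddCircle ^ 2 := by
  have hcoeff (k : ℤ) : fourierBasis.repr (hf.toLp f) k = fourierCoeff f k := by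
    rw [fourierBasis_repr, fourierCoeff_congr_ae hf.coeFn_toLp]
  have hparseval : HasSum (fun k ↦ ‖fourierCoeff f k‖ ^ 2) (‖hf.toLp f‖ ^ 2) := by
    simpa [hcoeff] using lp.hasSum_norm (by simp) (fourierBasis.repr (hf.toLp f))
  have hofReal := ENNReal.ofReal_tsum_of_nonneg (fun k ↦ sq_nonneg ‖fourierCoeff f k‖)
    hparseval.summable
  rw [hparseval.tsum_eq] at hofReal
  simpa only [ENNReal.ofReal_pow (norm_nonneg _), ofReal_norm, Lp.enorm_toLp] using hofReal.symm

theorem tsum_enorm_sq_fourierCoeff_mul_le {f g : AddCircle T → ℂ}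
    (hg : MemLp g ∞ haarAddCircle) (hf : MemLp f 2 haarAddCircle) :
    ∑' k, ‖fourierCoeff (fun x ↦ g x * f x) k‖ₑ ^ 2
      ≤ eLpNorm g ∞ haarAddCircle ^ 2 * ∑' k, ‖fourierCoeff f k‖ₑ ^ 2 := by
  rw [tsum_enorm_sq_fourierCoeff (hf.mul' hg), tsum_enorm_sq_fourierCoeff hf, ← mul_pow]
  gcongr
  exact eLpNorm_smul_le_eLpNorm_top_mul_eLpNorm 2 hf.aestronglyMeasurable g

theorem fourierCoeff_fourier_smul (m : ℤ) (f : AddCircle T → E) (k : ℤ) :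
    fourierCoeff (fun x ↦ fourier m x • f x) k = fourierCoeff f (k - m) := by
  simp only [fourierCoeff, smul_smul, ← fourier_add, neg_sub, neg_add_eq_sub]

theorem fourierCoeff_trigPoly (s : Finset κ) (ν : κ → ℤ) (a : κ → ℂ) :
    fourierCoeff (trigPoly (T := T) s ν a) = ∑ n ∈ s, Pi.single (ν n) (a n) := by
  have hsum : ⇑(trigPoly (T := T) s ν a) = ∑ n ∈ s, a n • ⇑(fourier (T := T) (ν n)) := by
    simp only [trigPoly, ContinuousMap.coe_sum, ContinuousMap.coe_smul]
  rw [hsum, fourierCoeff.sum _ _ fun n _ ↦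
    ((ContinuousMap.memLp haarAddCircle ℂ (fourier (ν n))).integrable le_rfl).smul (a n)]
  refine Finset.sum_congr rfl fun n _ ↦ funext fun k ↦ ?_
  rw [fourierCoeff.const_smul, fourierCoeff_fourier, ← Pi.smul_apply, ← Pi.single_smul,
    smul_eq_mul, mul_one]

theorem fourierCoeff_trigPoly_smul (s : Finset κ) (ν : κ → ℤ) (a : κ → ℂ) {f : AddCircle T → E}
    (hf : Integrable f haarAddCircle) (k : ℤ) :
    fourierCoeff (fun x ↦ trigPoly s ν a x • f x) k
      = ∑ n ∈ s, a n • fourierCoeff f (k - ν n) := by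
  have hsum : (fun x ↦ trigPoly s ν a x • f x)
      = ∑ n ∈ s, a n • fun x ↦ fourier (ν n) x • f x := by
    ext x
    simp only [trigPoly, ContinuousMap.sum_apply, ContinuousMap.smul_apply, Finset.sum_smul,
      Finset.sum_apply, Pi.smul_apply, smul_assoc]
  rw [hsum, fourierCoeff.sum _ _ fun n _ ↦ (hf.fourier_smul (ν n)).smul (a n), Finset.sum_apply]
  simp only [fourierCoeff.const_smul, fourierCoeff_fourier_smul]

theorem tsum_enorm_sq_convolution_le (s : Finset κ) (ν : κ → ℤ) (a : κ → ℂ) (c : ℤ → ℂ) :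
    ∑' k, ‖∑ n ∈ s, a n * c (k - ν n)‖ₑ ^ 2
      ≤ eLpNorm (trigPoly (T := T) s ν a) ∞ haarAddCircle ^ 2 * ∑' k, ‖c k‖ₑ ^ 2 := by
  classical
  refine ENNReal.summable.tsum_le_of_sum_le fun K ↦ ?_
  let S : Finset ℤ := K.biUnion fun k ↦ s.image fun n ↦ k - ν n
  let f : C(AddCircle T, ℂ) := trigPoly S id c
  have hf (l : ℤ) : fourierCoeff f l = if l ∈ S then c l else 0 := by
    simp only [f, fourierCoeff_trigPoly, Finset.sum_apply, id, Finset.sum_pi_single]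
  have hf2 : MemLp f 2 haarAddCircle := f.memLp haarAddCircle ℂ
  have hgf (k : ℤ) (hk : k ∈ K) :
      ∑ n ∈ s, a n * c (k - ν n) = fourierCoeff (fun x ↦ trigPoly s ν a x * f x) k := by
    refine .trans (Finset.sum_congr rfl fun n hn ↦ ?_)
      (fourierCoeff_trigPoly_smul s ν a (hf2.integrable one_le_two) k).symm
    rw [smul_eq_mul, hf, if_pos (Finset.mem_biUnion.2 ⟨k, hk, Finset.mem_image_of_mem _ hn⟩)]
  calc ∑ k ∈ K, ‖∑ n ∈ s, a n * c (k - ν n)‖ₑ ^ 2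
      = ∑ k ∈ K, ‖fourierCoeff (fun x ↦ trigPoly s ν a x * f x) k‖ₑ ^ 2 :=
        Finset.sum_congr rfl fun k hk ↦ by rw [hgf k hk]
    _ ≤ ∑' k, ‖fourierCoeff (fun x ↦ trigPoly s ν a x * f x) k‖ₑ ^ 2 := ENNReal.sum_le_tsum K
    _ ≤ eLpNorm (trigPoly (T := T) s ν a) ∞ haarAddCircle ^ 2 * ∑' k, ‖fourierCoeff f k‖ₑ ^ 2 :=
        tsum_enorm_sq_fourierCoeff_mul_le ((trigPoly s ν a).memLp haarAddCircle ℂ) hf2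
    _ ≤ eLpNorm (trigPoly (T := T) s ν a) ∞ haarAddCircle ^ 2 * ∑' k, ‖c k‖ₑ ^ 2 := by
        gcongr with k
        rw [hf]
        split_ifs <;> simp

end AddCircle

section UnitAddCircle

open AddCircle

variable {κ : Type*} (s : Finset κ) (ν : κ → ℤ) (a : κ → ℂ)

theorem trigPoly_coe (θ : ℝ) :
    trigPoly s ν a (θ : UnitAddCircle) = ∑ n ∈ s, a n * e (ν n * θ) := by
  simp only [trigPoly, ContinuousMap.sum_apply, ContinuousMap.smul_apply, smul_eq_mul,
    fourier_coe_apply, e]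
  push_cast
  simp only [div_one, mul_assoc]

theorem eLpNorm_top_trigPoly_le :
    eLpNorm (trigPoly s ν a : UnitAddCircle → ℂ) ∞ haarAddCircle
      ≤ ⨆ θ ∈ Set.Icc (0 : ℝ) 1, ‖∑ n ∈ s, a n * e (ν n * θ)‖ₑ := by
  rw [eLpNorm_exponent_top]
  refine eLpNormEssSup_le_of_ae_enorm_bound (.of_forall fun x ↦ ?_)
  obtain ⟨θ, hθ, rfl⟩ : x ∈ (fun θ : ℝ ↦ (θ : UnitAddCircle)) '' Set.Icc 0 (0 + 1) :=
    coe_image_Icc_eq (1 : ℝ) 0 ▸ Set.mem_univ x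
  rw [zero_add] at hθ
  rw [trigPoly_coe]
  exact le_iSup₂_of_le θ hθ le_rfl

theorem tsum_enorm_sq_correlation_le (ϖ : ℤ → ℂ) :
    ∑' k, ‖∑ n ∈ s, a n * ϖ (ν n + k)‖ₑ ^ 2
      ≤ (⨆ θ ∈ Set.Icc (0 : ℝ) 1, ‖∑ n ∈ s, a n * e (ν n * θ)‖ₑ) ^ 2 * ∑' k, ‖ϖ k‖ₑ ^ 2 := by
  calc ∑' k, ‖∑ n ∈ s, a n * ϖ (ν n + k)‖ₑ ^ 2
      = ∑' k, ‖∑ n ∈ s, a n * ϖ (-(k - ν n))‖ₑ ^ 2 := by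
        rw [← (Equiv.neg ℤ).tsum_eq]
        simp only [Equiv.neg_apply, neg_sub, ← sub_eq_add_neg]
    _ ≤ eLpNorm (trigPoly s ν a : UnitAddCircle → ℂ) ∞ haarAddCircle ^ 2 * ∑' k, ‖ϖ (-k)‖ₑ ^ 2 :=
        tsum_enorm_sq_convolution_le s ν a fun k ↦ ϖ (-k)
    _ = eLpNorm (trigPoly s ν a : UnitAddCircle → ℂ) ∞ haarAddCircle ^ 2 * ∑' k, ‖ϖ k‖ₑ ^ 2 :=
        congrArg _ ((Equiv.neg ℤ).tsum_eq fun k ↦ ‖ϖ k‖ₑ ^ 2)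
    _ ≤ (⨆ θ ∈ Set.Icc (0 : ℝ) 1, ‖∑ n ∈ s, a n * e (ν n * θ)‖ₑ) ^ 2 * ∑' k, ‖ϖ k‖ₑ ^ 2 := by
        gcongr
        exact eLpNorm_top_trigPoly_le s ν a

end UnitAddCircle

theorem fourier_maximal_bound_general {ι κ : Type*} (s : ι → Finset κ) (ν : ι → κ → ℤ)
    (a : ι → κ → ℂ) (ϖ : ℤ → ℂ) :
    ∑' k, ∑' i, ‖∑ n ∈ s i, a i n * ϖ (ν i n + k)‖ₑ ^ 2
      ≤ (∑' i, (⨆ θ ∈ Set.Icc (0 : ℝ) 1, ‖∑ n ∈ s i, a i n * e (ν i n * θ)‖ₑ) ^ 2)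
          * ∑' k, ‖ϖ k‖ₑ ^ 2 := by
  rw [ENNReal.tsum_comm, ← ENNReal.tsum_mul_right]
  exact ENNReal.tsum_le_tsum fun i ↦ tsum_enorm_sq_correlation_le (s i) (ν i) (a i) ϖ

/-- For every finitely supported `ϖ : ℤ → ℂ`,
`∑_{k∈ℤ} ∑_{p∈P} |(1/p) ∑_{0≤n<p} τ_p(n) ϖ(n+k)|²` is at most
`(∑_{p∈P} (sup_{θ∈[0,1]} |(1/p) ∑_{0≤n<p} τ_p(n) e(nθ)|)²) · ∑_{k∈ℤ} |ϖ(k)|²`. -/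
theorem fourier_maximal_bound
    (P : Set ℕ) (hPprime : ∀ p ∈ P, p.Prime) (τ : ℕ → ℕ → ℂ)
    (ϖ : ℤ → ℂ) (hϖ : (Function.support ϖ).Finite) :
    ∑' k : ℤ, ∑' p : P,
        ENNReal.ofReal
          (‖((p : ℕ) : ℂ)⁻¹ * ∑ n ∈ Finset.range (p : ℕ), τ p n * ϖ ((n : ℤ) + k)‖ ^ 2)
      ≤ (∑' p : P,
            (⨆ θ ∈ Set.Icc (0:ℝ) 1, ENNReal.ofReal
              ‖((p : ℕ) : ℂ)⁻¹ * ∑ n ∈ Finset.range (p : ℕ), τ p n * e ((n : ℝ) * θ)‖) ^ 2)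
          * ∑' k : ℤ, ENNReal.ofReal (‖ϖ k‖ ^ 2) := by
  simpa only [ENNReal.ofReal_pow (norm_nonneg _), ofReal_norm, Finset.mul_sum, mul_assoc,
    Int.cast_natCast] using fourier_maximal_bound_general (fun p : P ↦ Finset.range p)
      (fun _ n ↦ n) (fun p n ↦ ((p : ℕ) : ℂ)⁻¹ * τ p n) ϖ
end

section
/- (a) For every family of integers (a_p), indexed by the primes, with 0 ≤ a_p < p, and every set P of primes with ∑_{p∈P} (log p)/p < ∞, for Lebesgue-almost every y ∈ [0,1] the exponential averages (1/p) ∑_{0 ≤ n < p} e(n(y − a_p/p)) converge to 0 as p → ∞ along P. (b) There exists a family of integers (a_p) with 0 ≤ a_p < p such that for Lebesgue-almost every y ∈ [0,1], limsup_p | (1/p) ∑_{0 ≤ n < p} e(n(y − a_p/p)) | ≥ 1/2, where p ranges over all primes; in particular, these averages do not converge to 0 almost everywhere along the full sequence of primes. -/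
open Filter MeasureTheory

/-!
Let `A_N(x) = (1/N) ∑_{n < N} e(n x)`. By Parseval `∫₀¹ |A_p(y - b)|² dy = 1/p` for every shift
`b`, so if `∑_{p ∈ P} 1/p` converges then `∑_{p ∈ P} |A_p(y - b_p)|²` is finite for almost every
`y`.

Conversely, `|A_N(t)| ≥ |sinc (π N t)|`, so `|A_p(y - a/p)|` is at least nearly `2/π` as soon as
`y` is within slightly more than `1/(2p)` of `a/p` modulo `1`. If `∑_{q ∈ Q} 1/q` diverges, the
function `F(p) = log (1 + ∑_{q ∈ Q, q < p} 1/q)` tends to infinity with steps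
`F(p + 1) - F(p) = o(1/p)`, which vanish for `p ∉ Q`. Hence `F` moves across each class `y + ℤ`
infinitely often, and does so with `y` at distance `o(1/p)` from `F(p)` modulo `1`; take `a_p/p` to
be the fraction closest to `F(p)` modulo `1`.
-/

open Asymptotics Topology
open scoped FourierTransform Real

lemma exists_tendsto_atTop_sub_isLittleO {w : ℕ → ℝ} (hw : ∀ n, 0 ≤ w n) (hsum : ¬ Summable w) :
    ∃ F : ℕ → ℝ, Tendsto F atTop atTop ∧ (fun n ↦ F (n + 1) - F n) =o[atTop] w := by
  set S : ℕ → ℝ := fun n ↦ 1 + ∑ i ∈ Finset.range n, w i with hS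
  have hS_pos (n : ℕ) : 0 < S n := by
    have := Finset.sum_nonneg fun i (_ : i ∈ Finset.range n) ↦ hw i
    positivity
  have hS_succ (n : ℕ) : S (n + 1) = S n + w n := by
    simp only [hS, Finset.sum_range_succ, add_assoc]
  have hS_tendsto : Tendsto S atTop atTop :=
    tendsto_atTop_add_const_left _ _ ((not_summable_iff_tendsto_nat_atTop_of_nonneg hw).1 hsum)
  have hlog_nonneg (n : ℕ) : 0 ≤ Real.log (S (n + 1)) - Real.log (S n) :=
    sub_nonneg.2 (Real.log_le_log (hS_pos n) (by linarith [hS_succ n, hw n]))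
  have hlog_le (n : ℕ) : Real.log (S (n + 1)) - Real.log (S n) ≤ (S n)⁻¹ * w n :=
    calc Real.log (S (n + 1)) - Real.log (S n)
        = Real.log (S (n + 1) / S n) := (Real.log_div (hS_pos _).ne' (hS_pos n).ne').symm
      _ ≤ S (n + 1) / S n - 1 := Real.log_le_sub_one_of_pos (div_pos (hS_pos _) (hS_pos n))
      _ = (S n)⁻¹ * w n := by rw [hS_succ]; field_simp [(hS_pos n).ne']; ring
  refine ⟨fun n ↦ Real.log (S n), Real.tendsto_log_atTop.comp hS_tendsto, ?_⟩
  refine IsLittleO.of_bound fun c hc ↦ ?_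
  filter_upwards [hS_tendsto.inv_tendsto_atTop.eventually_le_const hc] with n hn
  rw [Real.norm_of_nonneg (hlog_nonneg n), Real.norm_of_nonneg (hw n)]
  exact (hlog_le n).trans (mul_le_mul_of_nonneg_right hn (hw n))

lemma frequently_exists_le_add_natCast_lt {F : ℕ → ℝ} (hF : Tendsto F atTop atTop) (x : ℝ) :
    ∃ᶠ n in atTop, ∃ k : ℕ, F n ≤ x + k ∧ x + k < F (n + 1) := by
  refine frequently_atTop.2 fun N ↦ ?_
  obtain ⟨k, hk⟩ := exists_nat_ge (F N - x)
  obtain ⟨m, hm, hNm⟩ := ((hF.eventually_gt_atTop (x + k)).and (eventually_ge_atTop N)).exists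
  obtain ⟨i, hle, hlt⟩ := Nat.exists_not_and_succ_of_not_zero_of_exists
    (p := fun i ↦ x + k < F (N + i)) (not_lt.2 (by rw [add_zero]; linarith))
    ⟨m - N, by rwa [Nat.add_sub_cancel' hNm]⟩
  exact ⟨N + i, Nat.le_add_right N i, k, not_lt.1 hle, hlt⟩

lemma ae_summable_norm_of_summable_integral_norm {α ι E : Type*} [MeasurableSpace α]
    {μ : Measure α} [Countable ι] [NormedAddCommGroup E] {f : ι → α → E}
    (hf : ∀ i, Integrable (f i) μ) (hsum : Summable fun i ↦ ∫ x, ‖f i x‖ ∂μ) :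
    ∀ᵐ x ∂μ, Summable fun i ↦ ‖f i x‖ := by
  have hfin : ∫⁻ x, ∑' i, ‖f i x‖ₑ ∂μ ≠ ⊤ := by
    rw [lintegral_tsum fun i ↦ (hf i).aestronglyMeasurable.enorm]
    simp_rw [← fun i ↦ ofReal_integral_norm_eq_lintegral_enorm (hf i)]
    exact hsum.tsum_ofReal_ne_top
  have hmeas : AEMeasurable (fun x ↦ ∑' i, ‖f i x‖ₑ) μ :=
    .tsum fun i ↦ (hf i).aestronglyMeasurable.enorm
  filter_upwards [ae_lt_top' hmeas hfin] with x hx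
  simpa using ENNReal.summable_toReal hx.ne

lemma not_tendsto_zero_of_frequently_le_norm {α E : Type*} [SeminormedAddCommGroup E]
    {l : Filter α} {f : α → E} {c : ℝ} (hc : 0 < c) (hf : ∃ᶠ x in l, c ≤ ‖f x‖) :
    ¬ Tendsto f l (𝓝 0) := fun h ↦
  hf <| (h.norm.eventually_lt_const (by rwa [norm_zero])).mono fun _ ↦ not_le.2

lemma e_eq_fourierChar (x : ℝ) : e x = 𝐞 x := by
  rw [e, Real.fourierChar_apply]
  push_cast
  ring_nf

lemma e_natCast_mul (n : ℕ) (x : ℝ) : e (n * x) = e x ^ n := by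
  simp only [e_eq_fourierChar, ← nsmul_eq_mul, AddChar.map_nsmul_eq_pow, Circle.coe_pow]

lemma e_periodic : Function.Periodic e 1 := fun x ↦ by
  rw [e, e, Complex.ofReal_add, mul_add, Complex.ofReal_one, mul_one, Complex.exp_periodic]

lemma norm_e (x : ℝ) : ‖e x‖ = 1 := by
  rw [e_eq_fourierChar, Circle.norm_coe]

lemma norm_e_sub_one (x : ℝ) : ‖e x - 1‖ = 2 * |Real.sin (π * x)| := by
  have he : e x = Complex.exp (Complex.I * (2 * (π * x) : ℝ)) := by
    rw [e]; push_cast; ring_nf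
  rw [he, Complex.norm_exp_I_mul_ofReal_sub_one, mul_div_cancel_left₀ _ two_ne_zero, norm_mul,
    Real.norm_ofNat, Real.norm_eq_abs]

lemma e_mul_conj_e (x y : ℝ) : e x * starRingEnd ℂ (e y) = e (x - y) := by
  simp only [e_eq_fourierChar, Circle.starRingEnd_addChar, sub_eq_add_neg,
    AddChar.map_add_eq_mul, Circle.coe_mul]

lemma continuous_e : Continuous e := by
  unfold e
  fun_prop

lemma integral_e_intCast_mul (k : ℤ) : ∫ x in (0 : ℝ)..1, e (k * x) = if k = 0 then 1 else 0 := by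
  split_ifs with hk
  · simp [hk, e]
  · have hc : (2 * π * Complex.I * k : ℂ) ≠ 0 := by simp [Real.pi_ne_zero, hk]
    have he (x : ℝ) : e (k * x) = Complex.exp (2 * π * Complex.I * k * x) := by
      rw [e]; push_cast; ring_nf
    have hexp : Complex.exp (2 * π * Complex.I * k) = 1 := by
      rw [mul_comm]; exact Complex.exp_int_mul_two_pi_mul_I k
    simp_rw [he, integral_exp_mul_complex hc]
    simp [hexp]

lemma integral_norm_sq_sum_mul_e (s : Finset ℕ) (c : ℕ → ℂ) :
    ∫ x in (0 : ℝ)..1, ‖∑ n ∈ s, c n * e (n * x)‖ ^ 2 = ∑ n ∈ s, ‖c n‖ ^ 2 := by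
  have hexpand (x : ℝ) : ((‖∑ n ∈ s, c n * e (n * x)‖ ^ 2 : ℝ) : ℂ) =
      ∑ n ∈ s, ∑ m ∈ s, c n * starRingEnd ℂ (c m) * e (((n - m : ℤ) : ℝ) * x) := by
    rw [Complex.ofReal_pow, ← Complex.mul_conj', map_sum, Finset.sum_mul_sum]
    refine Finset.sum_congr rfl fun n _ ↦ Finset.sum_congr rfl fun m _ ↦ ?_
    rw [map_mul, mul_mul_mul_comm, e_mul_conj_e, ← sub_mul]
    push_cast
    rfl
  have hcont (n m : ℕ) : Continuous fun x ↦
      c n * starRingEnd ℂ (c m) * e (((n - m : ℤ) : ℝ) * x) :=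
    continuous_const.mul (continuous_e.comp (continuous_const_mul _))
  have hint (n m : ℕ) : ∫ x in (0 : ℝ)..1,
      c n * starRingEnd ℂ (c m) * e (((n - m : ℤ) : ℝ) * x) =
        if n = m then ↑(‖c n‖ ^ 2) else 0 := by
    rw [intervalIntegral.integral_const_mul, integral_e_intCast_mul]
    simp only [sub_eq_zero, Nat.cast_inj]
    split_ifs with hnm
    · rw [hnm, mul_one, Complex.mul_conj', Complex.ofReal_pow]
    · rw [mul_zero]
  apply Complex.ofReal_injective
  rw [← intervalIntegral.integral_ofReal]
  simp_rw [hexpand]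
  rw [intervalIntegral.integral_finsetSum fun n _ ↦
    (continuous_finsetSum s fun m _ ↦ hcont n m).intervalIntegrable _ _]
  simp_rw [intervalIntegral.integral_finsetSum fun m _ ↦ (hcont _ m).intervalIntegrable _ _, hint,
    Finset.sum_ite_eq, Complex.ofReal_sum]
  exact Finset.sum_congr rfl fun n hn ↦ if_pos hn

/-- The exponential average `(1/N) ∑_{0 ≤ n < N} e(n x)`, with value `0` at `N = 0`. The averages of
the theorem are `expAvg p (y - a_p / p)`. -/
noncomputable def expAvg (N : ℕ) (x : ℝ) : ℂ := (N : ℂ)⁻¹ * ∑ n ∈ Finset.range N, e (n * x)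

lemma continuous_expAvg (N : ℕ) : Continuous (expAvg N) :=
  continuous_const.mul <| continuous_finsetSum _ fun _ _ ↦
    continuous_e.comp (continuous_const_mul _)

lemma expAvg_periodic (N : ℕ) : Function.Periodic (expAvg N) 1 := fun x ↦ by
  simp only [expAvg, e_natCast_mul, e_periodic x]

lemma norm_expAvg_le_one (N : ℕ) (x : ℝ) : ‖expAvg N x‖ ≤ 1 :=
  calc ‖expAvg N x‖ ≤ (N : ℝ)⁻¹ * ∑ n ∈ Finset.range N, ‖e (n * x)‖ := by
        rw [expAvg, norm_mul, norm_inv, Complex.norm_natCast]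
        gcongr
        exact norm_sum_le _ _
    _ = (N : ℝ)⁻¹ * N := by simp [norm_e]
    _ ≤ 1 := inv_mul_le_one

lemma integral_norm_sq_expAvg_sub (N : ℕ) (b t : ℝ) :
    ∫ y in t..t + 1, ‖expAvg N (y - b)‖ ^ 2 = (N : ℝ)⁻¹ := by
  have hper : Function.Periodic (fun x ↦ ‖expAvg N x‖ ^ 2) 1 := fun x ↦ by
    simp only [expAvg_periodic N x]
  calc ∫ y in t..t + 1, ‖expAvg N (y - b)‖ ^ 2
      = ∫ y in b..b + 1, ‖expAvg N (y - b)‖ ^ 2 := (hper.sub_const b).intervalIntegral_add_eq t b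
    _ = ∫ x in (0 : ℝ)..1, ‖expAvg N x‖ ^ 2 := by
        rw [intervalIntegral.integral_comp_sub_right (fun x ↦ ‖expAvg N x‖ ^ 2), sub_self,
          add_sub_cancel_left]
    _ = N * (N : ℝ)⁻¹ ^ 2 := by
        simp only [expAvg, Finset.mul_sum, integral_norm_sq_sum_mul_e, norm_inv,
          Complex.norm_natCast, Finset.sum_const, Finset.card_range, nsmul_eq_mul]
    _ = (N : ℝ)⁻¹ := by rcases eq_or_ne N 0 with rfl | hN <;> [simp; field_simp]

lemma ae_tendsto_expAvg_sub {P : Set ℕ} (hP : Summable fun p : P ↦ (1 : ℝ) / p) (b : ℕ → ℝ) :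
    ∀ᵐ y : ℝ, Tendsto (fun p ↦ expAvg p (y - b p)) (atTop ⊓ 𝓟 P) (𝓝 0) := by
  have hcont (p : ℕ) : Continuous fun y ↦ ‖expAvg p (y - b p)‖ ^ 2 :=
    ((continuous_expAvg p).comp (continuous_sub_right _)).norm.pow 2
  have hunit (k : ℤ) : ∀ᵐ y ∂volume.restrict (Set.Ioc (k : ℝ) (k + 1)),
      Summable fun p : P ↦ ‖‖expAvg p (y - b p)‖ ^ 2‖ := by
    refine ae_summable_norm_of_summable_integral_norm
      (fun p ↦ (hcont p).integrableOn_Ioc) (hP.congr fun p ↦ ?_)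
    simp only [norm_pow, norm_norm]
    rw [← intervalIntegral.integral_of_le (by linarith), integral_norm_sq_expAvg_sub, one_div]
  have hsum : ∀ᵐ y : ℝ, Summable fun p : P ↦ ‖‖expAvg p (y - b p)‖ ^ 2‖ := by
    rw [← Measure.restrict_univ (μ := volume), ← iUnion_Ioc_intCast ℝ, ae_restrict_iUnion_iff]
    exact hunit
  filter_upwards [hsum] with y hy
  have hcofinite : Tendsto (fun p : P ↦ expAvg p (y - b p)) cofinite (𝓝 0) := by
    rw [tendsto_zero_iff_norm_tendsto_zero]
    simpa using hy.tendsto_cofinite_zero.sqrt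
  rw [← Nat.cofinite_eq_atTop, ← subtype_coe_map_comap, Subtype.val_injective.comap_cofinite_eq]
  exact tendsto_map'_iff.2 hcofinite

lemma abs_sinc_le_norm_expAvg {N : ℕ} (hN : N ≠ 0) (t : ℝ) :
    |Real.sinc (π * (N * t))| ≤ ‖expAvg N t‖ := by
  have hN' : (0 : ℝ) < N := by positivity
  have hπ := Real.pi_pos
  rcases eq_or_ne t 0 with rfl | ht
  · simp [expAvg, e, hN]
  set S := ∑ n ∈ Finset.range N, e (n * t) with hS
  have hgeom : ‖S‖ * (2 * |Real.sin (π * t)|) = 2 * |Real.sin (π * (N * t))| := by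
    rw [← norm_e_sub_one, ← norm_e_sub_one, ← norm_mul, hS, e_natCast_mul]
    simp_rw [e_natCast_mul, geom_sum_mul]
  have hsin : |Real.sin (π * t)| ≤ π * |t| := by
    simpa only [abs_mul, abs_of_pos hπ] using Real.abs_sin_le_abs (x := π * t)
  calc |Real.sinc (π * (N * t))|
      = |Real.sin (π * (N * t))| / (π * (N * |t|)) := by
        rw [Real.sinc_of_ne_zero (by positivity), abs_div, abs_mul π, abs_mul (N : ℝ),
          abs_of_pos hπ, abs_of_pos hN']
    _ ≤ ‖S‖ * (π * |t|) / (π * (N * |t|)) := by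
        gcongr
        linarith [mul_le_mul_of_nonneg_left hsin (norm_nonneg S)]
    _ = (N : ℝ)⁻¹ * ‖S‖ := by field_simp
    _ = ‖expAvg N t‖ := by rw [expAvg, norm_mul, norm_inv, Complex.norm_natCast]

lemma two_div_pi_le_abs_sinc {x : ℝ} (hx : |x| ≤ π / 2) : 2 / π ≤ |Real.sinc x| := by
  rcases eq_or_ne x 0 with rfl | hx₀
  · rw [Real.sinc_zero, abs_one, div_le_one Real.pi_pos]
    exact Real.two_le_pi
  · rw [Real.sinc_of_ne_zero hx₀, abs_div, le_div_iff₀ (abs_pos.2 hx₀)]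
    exact Real.mul_abs_le_abs_sin hx

lemma exists_pos_forall_lt_norm_expAvg {c : ℝ} (hc : c < 2 / π) :
    ∃ δ > 0, ∀ N : ℕ, N ≠ 0 → ∀ t : ℝ, |N * t| ≤ δ + 1 / 2 → c < ‖expAvg N t‖ := by
  have hopen : IsOpen {u | c < |Real.sinc (π * u)|} :=
    isOpen_lt continuous_const (Real.continuous_sinc.comp (continuous_const_mul _)).abs
  have hsub : Metric.closedBall 0 (1 / 2) ⊆ {u | c < |Real.sinc (π * u)|} := by
    intro u hu
    refine hc.trans_le (two_div_pi_le_abs_sinc ?_)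
    rw [abs_mul, abs_of_pos Real.pi_pos, div_eq_mul_one_div]
    exact mul_le_mul_of_nonneg_left (mem_closedBall_zero_iff.1 hu) Real.pi_pos.le
  obtain ⟨δ, hδ, hδsub⟩ := (isCompact_closedBall _ _).exists_cthickening_subset_open hopen hsub
  rw [cthickening_closedBall hδ.le one_half_pos.le] at hδsub
  exact ⟨δ, hδ, fun N hN t ht ↦
    (hδsub (mem_closedBall_zero_iff.2 ht)).trans_le (abs_sinc_le_norm_expAvg hN t)⟩

lemma exists_lt_exists_abs_mul_sub_intCast_sub_le_half {N : ℕ} (hN : 0 < N) (x : ℝ) :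
    ∃ a < N, ∃ k : ℤ, |N * (x - k) - a| ≤ 1 / 2 := by
  have hN' : (0 : ℤ) < N := by exact_mod_cast hN
  obtain ⟨a, ha⟩ := Int.eq_ofNat_of_zero_le (Int.emod_nonneg (round (N * x)) hN'.ne')
  have haN : (a : ℤ) < N := ha ▸ Int.emod_lt_of_pos (round (N * x)) hN'
  refine ⟨a, by exact_mod_cast haN, round (N * x) / N, ?_⟩
  have hdiv : (a + N * (round (N * x) / N : ℤ) : ℝ) = round (N * x) := by
    exact_mod_cast ha ▸ Int.emod_add_mul_ediv (round (N * x)) N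
  rw [show N * (x - (round (N * x) / N : ℤ)) - a = N * x - round (N * x) by rw [← hdiv]; ring]
  exact abs_sub_round _

lemma exists_numerators_frequently_lt_norm_expAvg {Q : Set ℕ}
    (hQ : ¬ Summable fun q : Q ↦ (1 : ℝ) / q) :
    ∃ a : ℕ → ℕ, (∀ p, 0 < p → a p < p) ∧ ∀ y : ℝ, ∀ c < 2 / π,
      ∃ᶠ p in atTop ⊓ 𝓟 Q, c < ‖expAvg p (y - a p / p)‖ := by
  set w : ℕ → ℝ := Q.indicator fun q ↦ 1 / q with hw
  obtain ⟨F, hF, hFw⟩ := exists_tendsto_atTop_sub_isLittleO (w := w)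
    (Set.indicator_nonneg fun _ _ ↦ by positivity) (summable_subtype_iff_indicator.not.1 hQ)
  choose! a ha k hk using fun (p : ℕ) (hp : 0 < p) ↦
    exists_lt_exists_abs_mul_sub_intCast_sub_le_half hp (F p)
  refine ⟨a, ha, fun y c hc ↦ frequently_inf_principal.2 ?_⟩
  obtain ⟨δ, hδ, hδc⟩ := exists_pos_forall_lt_norm_expAvg hc
  refine ((frequently_exists_le_add_natCast_lt hF y).and_eventually
    ((hFw.def hδ).and (eventually_gt_atTop 0))).mono ?_
  rintro p ⟨⟨j, hjle, hjlt⟩, hstep, hp⟩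
  have hpos : 0 < F (p + 1) - F p := by linarith
  have hpQ : p ∈ Q := by
    by_contra hpQ
    rw [hw, Set.indicator_of_notMem hpQ, norm_zero, mul_zero] at hstep
    exact hpos.ne' (norm_le_zero_iff.1 hstep)
  have hp' : (0 : ℝ) < p := by exact_mod_cast hp
  have hgap : p * (F (p + 1) - F p) ≤ δ := by
    rw [hw, Set.indicator_of_mem hpQ, Real.norm_of_nonneg hpos.le,
      Real.norm_of_nonneg (by positivity), mul_one_div, le_div_iff₀ hp'] at hstep
    rwa [mul_comm]
  refine ⟨hpQ, ?_⟩
  rw [← (expAvg_periodic p).sub_int_mul_eq (k p - j)]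
  refine hδc p hp.ne' _ ?_
  calc |p * (y - a p / p - (k p - j : ℤ) * 1)|
      = |p * (y + j - F p) + (p * (F p - k p) - a p)| := by
        push_cast; congr 1; field_simp; ring
    _ ≤ |p * (y + j - F p)| + |p * (F p - k p) - a p| := abs_add_le _ _
    _ ≤ δ + 1 / 2 := by
        refine add_le_add ?_ (hk p hp)
        rw [abs_of_nonneg (mul_nonneg hp'.le (sub_nonneg.2 hjle))]
        exact (mul_le_mul_of_nonneg_left (by linarith) hp'.le).trans hgap

lemma summable_one_div_of_summable_log_div {P : Set ℕ} (hP : ∀ p ∈ P, 2 ≤ p)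
    (hsum : Summable fun p : P ↦ Real.log p / p) : Summable fun p : P ↦ (1 : ℝ) / p := by
  refine .of_nonneg_of_le (fun _ ↦ by positivity) (fun p ↦ ?_) (hsum.mul_left (Real.log 2)⁻¹)
  have hlog : 0 < Real.log 2 := Real.log_pos one_lt_two
  have hp : Real.log 2 ≤ Real.log p := Real.log_le_log two_pos (by exact_mod_cast hP p p.2)
  rw [← mul_div_assoc, inv_mul_eq_div]
  gcongr
  exact (one_le_div hlog).2 hp

theorem sparseness_needed_for_exponential_averages_general :
    (∀ P : Set ℕ, (Summable fun p : P ↦ (1 : ℝ) / p) → ∀ b : ℕ → ℝ, ∀ᵐ y : ℝ,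
      Tendsto (fun p ↦ expAvg p (y - b p)) (atTop ⊓ 𝓟 P) (𝓝 0)) ∧
    (∀ Q : Set ℕ, (¬ Summable fun q : Q ↦ (1 : ℝ) / q) →
      ∃ a : ℕ → ℕ, (∀ p, 0 < p → a p < p) ∧ ∀ y : ℝ,
        2 / π ≤ limsup (fun p ↦ ‖expAvg p (y - a p / p)‖) (atTop ⊓ 𝓟 Q) ∧
        ¬ Tendsto (fun p ↦ expAvg p (y - a p / p)) (atTop ⊓ 𝓟 Q) (𝓝 0)) := by
  refine ⟨fun P hP b ↦ ae_tendsto_expAvg_sub hP b, fun Q hQ ↦ ?_⟩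
  obtain ⟨a, ha, hfreq⟩ := exists_numerators_frequently_lt_norm_expAvg hQ
  refine ⟨a, ha, fun y ↦ ⟨?_, ?_⟩⟩
  · have hbdd : IsBoundedUnder (· ≤ ·) (atTop ⊓ 𝓟 Q) fun p ↦ ‖expAvg p (y - a p / p)‖ :=
      isBoundedUnder_of ⟨1, fun p ↦ norm_expAvg_le_one p _⟩
    have hcobdd : IsCoboundedUnder (· ≤ ·) (atTop ⊓ 𝓟 Q) fun p ↦ ‖expAvg p (y - a p / p)‖ :=
      .of_frequently_ge ((hfreq y 0 (by positivity)).mono fun _ ↦ le_of_lt)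
    exact (le_limsup_iff hcobdd hbdd).2 (hfreq y)
  · exact not_tendsto_zero_of_frequently_le_norm (one_div_pos.2 Real.pi_pos)
      ((hfreq y (1 / π) (by gcongr; exact one_lt_two)).mono fun _ ↦ le_of_lt)

/-- (a) For every family `(a_p)` with `0 ≤ a_p < p` and every set `P` of primes with
`∑_{p∈P} (log p)/p < ∞`, for almost every `y ∈ [0,1]` the averages
`(1/p) ∑_{0≤n<p} e(n(y - a_p/p))` tend to `0` along `P`.
(b) There is a family `(a_p)` with `0 ≤ a_p < p` such that for almost every `y ∈ [0,1]`
the limsup of the moduli of these averages along all primes is at least `1/2`; in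
particular they do not tend to `0` almost everywhere along the full sequence of primes. -/
theorem sparseness_needed_for_exponential_averages :
    (∀ a : ℕ → ℕ, (∀ p : ℕ, p.Prime → a p < p) →
      ∀ P : Set ℕ, (∀ p ∈ P, p.Prime) →
        (Summable fun p : P => Real.log p / p) →
        ∀ᵐ y ∂(volume.restrict (Set.Icc (0:ℝ) 1)),
          Tendsto
            (fun p : ℕ => (p : ℂ)⁻¹ *
              ∑ n ∈ Finset.range p, e ((n : ℝ) * (y - (a p : ℝ) / p)))
            (atTop ⊓ 𝓟 P) (nhds 0)) ∧
    (∃ a : ℕ → ℕ, (∀ p : ℕ, p.Prime → a p < p) ∧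
      ∀ᵐ y ∂(volume.restrict (Set.Icc (0:ℝ) 1)),
        (1/2 : ℝ) ≤
          Filter.limsup
            (fun p : ℕ =>
              ‖(p : ℂ)⁻¹ * ∑ n ∈ Finset.range p, e ((n : ℝ) * (y - (a p : ℝ) / p))‖)
            (atTop ⊓ 𝓟 {p : ℕ | p.Prime}) ∧
        ¬ Tendsto
            (fun p : ℕ => (p : ℂ)⁻¹ *
              ∑ n ∈ Finset.range p, e ((n : ℝ) * (y - (a p : ℝ) / p)))
            (atTop ⊓ 𝓟 {p : ℕ | p.Prime}) (nhds 0)) := by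
  refine ⟨fun a _ P hP hsum ↦ ae_restrict_of_ae <|
    sparseness_needed_for_exponential_averages_general.1 P
      (summable_one_div_of_summable_log_div (fun p hp ↦ (hP p hp).two_le) hsum) _, ?_⟩
  obtain ⟨a, ha, hy⟩ := sparseness_needed_for_exponential_averages_general.2
    {p | p.Prime} Nat.Primes.not_summable_one_div
  have hπ : (1 / 2 : ℝ) ≤ 2 / π := by
    rw [div_le_div_iff₀ two_pos Real.pi_pos]
    linarith [Real.pi_le_four]
  exact ⟨a, fun p hp ↦ ha p hp.pos, .of_forall fun y ↦ (hy y).imp_left hπ.trans⟩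
end
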